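/- arXiv:1510.05960 — 10 statements merged into one kernel-verified Lean document; each statement's English description precedes it below -/
import Mathlib

section
/- Let g(x) := sin(x) − x·cos(x). Then for every real N ≥ 3, every x ∈ (0, π) and every t ∈ [0, 1], one has g(t·x) ≥ t^N · g(x). -/
/-!
The function `g x = sin x - x * cos x` vanishes at `0` and has derivative `x * sin x`. To compare
`x ↦ t ^ N * g x` with `x ↦ g (t * x)`, which agree at `0`, it suffices to compare their
derivatives on `[0, π]`. Since `t ^ N ≤ t ^ 3`, this reduces to `t * sin x ≤ sin (t * x)`, which is
the concavity of the sine on `[0, π]`.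
-/

theorem mul_le_comp_mul_left_of_hasDerivAt {f f' : ℝ → ℝ} {c t x : ℝ} (hx : 0 ≤ x)
    (ht : t ∈ Set.Icc (0 : ℝ) 1) (hf : ∀ y ∈ Set.Icc 0 x, HasDerivAt f (f' y) y)
    (h_zero : c * f 0 ≤ f 0) (h_deriv : ∀ y ∈ Set.Ico 0 x, c * f' y ≤ t * f' (t * y)) :
    c * f x ≤ f (t * x) := by
  have h_left : ∀ y ∈ Set.Icc 0 x, HasDerivAt (fun z ↦ c * f z) (c * f' y) y :=
    fun y hy ↦ (hf y hy).const_mul c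
  have h_right : ∀ y ∈ Set.Icc 0 x, HasDerivAt (fun z ↦ f (t * z)) (t * f' (t * y)) y := by
    intro y hy
    have hty : t * y ∈ Set.Icc 0 x :=
      ⟨mul_nonneg ht.1 hy.1, (mul_le_of_le_one_left hy.1 ht.2).trans hy.2⟩
    exact ((hf (t * y) hty).comp y (hasDerivAt_const_mul t)).congr_deriv (mul_comm _ _)
  exact image_le_of_deriv_right_le_deriv_boundary
    (fun y hy ↦ (h_left y hy).continuousAt.continuousWithinAt)
    (fun y hy ↦ (h_left y (Set.Ico_subset_Icc_self hy)).hasDerivWithinAt)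
    (by simpa only [mul_zero] using h_zero)
    (fun y hy ↦ (h_right y hy).continuousAt.continuousWithinAt)
    (fun y hy ↦ (h_right y (Set.Ico_subset_Icc_self hy)).hasDerivWithinAt)
    h_deriv (Set.right_mem_Icc.2 hx)

theorem hasDerivAt_sin_sub_mul_cos (x : ℝ) :
    HasDerivAt (fun y ↦ Real.sin y - y * Real.cos y) (x * Real.sin x) x :=
  ((Real.hasDerivAt_sin x).sub ((hasDerivAt_id' x).mul (Real.hasDerivAt_cos x))).congr_deriv
    (by ring)

theorem mul_sin_le_sin_mul {t x : ℝ} (ht : t ∈ Set.Icc (0 : ℝ) 1) (hx : x ∈ Set.Icc 0 Real.pi) :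
    t * Real.sin x ≤ Real.sin (t * x) := by
  have h := strictConcaveOn_sin_Icc.concaveOn.2 hx (Set.left_mem_Icc.2 Real.pi_pos.le)
    ht.1 (sub_nonneg.2 ht.2) (add_sub_cancel t 1)
  simpa using h

/-- Lemma 3.6 of the paper: with `g x = sin x - x * cos x`, for every `N ≥ 3`,
`x ∈ (0, π)` and `t ∈ [0, 1]`, one has `g (t * x) ≥ t ^ N * g x`. -/
theorem g_homogeneity_ineq (N : ℝ) (hN : 3 ≤ N) (x : ℝ) (hx : x ∈ Set.Ioo 0 Real.pi)
    (t : ℝ) (ht : t ∈ Set.Icc (0 : ℝ) 1) :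
    Real.sin (t * x) - t * x * Real.cos (t * x) ≥
      t ^ N * (Real.sin x - x * Real.cos x) := by
  have h_pow : t ^ N ≤ t ^ 3 := by
    simpa using Real.rpow_le_rpow_of_exponent_ge' ht.1 ht.2 (by norm_num) hN
  refine mul_le_comp_mul_left_of_hasDerivAt hx.1.le ht
    (fun y _ ↦ hasDerivAt_sin_sub_mul_cos y) (by simp) fun y hy ↦ ?_
  have hy_mem : y ∈ Set.Icc 0 Real.pi := ⟨hy.1, (hy.2.trans hx.2).le⟩
  calc t ^ N * (y * Real.sin y)
      ≤ t ^ 3 * (y * Real.sin y) :=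
        mul_le_mul_of_nonneg_right h_pow (mul_nonneg hy.1 (Real.sin_nonneg_of_mem_Icc hy_mem))
    _ = t ^ 2 * y * (t * Real.sin y) := by ring
    _ ≤ t ^ 2 * y * Real.sin (t * y) :=
        mul_le_mul_of_nonneg_left (mul_sin_le_sin_mul ht hy_mem)
          (mul_nonneg (sq_nonneg t) hy.1)
    _ = t * (t * y * Real.sin (t * y)) := by ring
end

section
/- For every s ∈ [0, π], one has (3 − s²)·sin(s) − 3·s·cos(s) ≥ 0. Equivalently, the function g(s) = sin(s) − s·cos(s) satisfies the differential inequality g'(s) ≤ 3·g(s)/s for all s ∈ (0, π). -/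
/-!
Write `g s = sin s - s * cos s`, so that `g' s = s * sin s`. The left-hand side of the inequality is
`h = 3 * g - s * g'`, and `h' = s * g`. Both `g` and `h` vanish at `0`, so on `[0, π]` the sign of
`sin` passes to `g`, and then from `g` to `h`.
-/

open Real Set

theorem hasDerivAt_sin_sub_mul_cos_s1 (x : ℝ) :
    HasDerivAt (fun s ↦ sin s - s * cos s) (x * sin x) x := by
  convert! (hasDerivAt_sin x).sub ((hasDerivAt_id' x).mul (hasDerivAt_cos x)) using 1
  ring

theorem monotoneOn_sin_sub_mul_cos : MonotoneOn (fun s ↦ sin s - s * cos s) (Icc 0 π) := by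
  refine monotoneOn_of_hasDerivWithinAt_nonneg (convex_Icc 0 π) (by fun_prop)
    (fun x _ ↦ (hasDerivAt_sin_sub_mul_cos_s1 x).hasDerivWithinAt) fun x hx ↦ ?_
  have hx' : x ∈ Icc 0 π := interior_subset hx
  exact mul_nonneg hx'.1 (sin_nonneg_of_mem_Icc hx')

theorem mul_cos_le_sin {x : ℝ} (hx : x ∈ Icc 0 π) : x * cos x ≤ sin x := by
  simpa using monotoneOn_sin_sub_mul_cos (left_mem_Icc.2 pi_nonneg) hx hx.1

theorem hasDerivAt_three_sub_sq_mul_sin_sub_three_mul_mul_cos (x : ℝ) :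
    HasDerivAt (fun s ↦ (3 - s ^ 2) * sin s - 3 * s * cos s) (x * (sin x - x * cos x)) x := by
  convert! (((hasDerivAt_pow 2 x).const_sub 3).mul (hasDerivAt_sin x)).sub
    (((hasDerivAt_id' x).const_mul 3).mul (hasDerivAt_cos x)) using 1
  ring

theorem monotoneOn_three_sub_sq_mul_sin_sub_three_mul_mul_cos :
    MonotoneOn (fun s ↦ (3 - s ^ 2) * sin s - 3 * s * cos s) (Icc 0 π) := by
  refine monotoneOn_of_hasDerivWithinAt_nonneg (convex_Icc 0 π) (by fun_prop)
    (fun x _ ↦ (hasDerivAt_three_sub_sq_mul_sin_sub_three_mul_mul_cos x).hasDerivWithinAt)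
    fun x hx ↦ ?_
  have hx' : x ∈ Icc 0 π := interior_subset hx
  exact mul_nonneg hx'.1 (sub_nonneg.2 (mul_cos_le_sin hx'))

/-- The key differential inequality in the proof of Lemma 3.6:
`(3 - s²)·sin s − 3·s·cos s ≥ 0` for all `s ∈ [0, π]`.  Equivalently
`g'(s) ≤ 3 g(s)/s` on `(0, π)` for `g s = sin s - s cos s`. -/
theorem key_differential_ineq (s : ℝ) (hs : s ∈ Set.Icc 0 Real.pi) :
    (3 - s ^ 2) * Real.sin s - 3 * s * Real.cos s ≥ 0 := by
  simpa using monotoneOn_three_sub_sq_mul_sin_sub_three_mul_mul_cos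
    (left_mem_Icc.2 pi_nonneg) hs hs.1
end

section
/- Let a = (a_1, …, a_d) with a_i ≥ 0 for all i and a_i > 0 for at least one i, and let w ∈ ℝ with 0 < |w| < 2π/α_d. Then J(a, w) > 0. -/
open Finset

/-- The Jacobian determinant of the exponential map of a corank-1 Carnot group
whose skew-symmetric matrix has nonzero singular values `α 0 ≤ … ≤ α (d-1)`,
as a function of `a i = ‖pⁱ‖²` and `w = p_z`. -/
noncomputable def Jdet (d : ℕ) (α : Fin d → ℝ) (a : Fin d → ℝ) (w : ℝ) : ℝ :=
  2 ^ (2 * d) / ((∏ i, α i) ^ 2 * w ^ (2 * d + 2)) *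
    ∑ i, a i * (∏ j ∈ univ.erase i, Real.sin (α j * w / 2) ^ 2) *
      Real.sin (α i * w / 2) *
      (Real.sin (α i * w / 2) - α i * w / 2 * Real.cos (α i * w / 2))

/-! Put `x i = α i * w / 2`. The bound on `w` puts every `x i` into `(-π, π)`. The function
`x ↦ sin x * (sin x - x * cos x)` is even, and on `(0, π)` both of its factors are positive: for
the second one this is `x < tan x` before `π / 2` and `cos x ≤ 0 < sin x` afterwards. So each
summand of `J` is `a i` times a positive number, and the prefactor is positive because `α` and `w`
enter it only through even powers. -/

theorem mul_cos_lt_sin {x : ℝ} (hx0 : 0 < x) (hxπ : x < Real.pi) :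
    x * Real.cos x < Real.sin x := by
  rcases lt_or_ge x (Real.pi / 2) with hx | hx
  · have hcos : 0 < Real.cos x := Real.cos_pos_of_mem_Ioo ⟨by linarith, hx⟩
    have htan : x < Real.sin x / Real.cos x :=
      Real.tan_eq_sin_div_cos x ▸ Real.lt_tan hx0 hx
    exact (lt_div_iff₀ hcos).mp htan
  · have hcos : Real.cos x ≤ 0 := Real.cos_nonpos_of_pi_div_two_le_of_le hx (by linarith)
    calc x * Real.cos x ≤ 0 := mul_nonpos_of_nonneg_of_nonpos hx0.le hcos
      _ < Real.sin x := Real.sin_pos_of_pos_of_lt_pi hx0 hxπ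

theorem sin_mul_sin_sub_mul_cos_abs (x : ℝ) :
    Real.sin |x| * (Real.sin |x| - |x| * Real.cos |x|) =
      Real.sin x * (Real.sin x - x * Real.cos x) := by
  rcases abs_choice x with h | h
  · rw [h]
  · rw [h, Real.sin_neg, Real.cos_neg]
    ring

theorem sin_mul_sin_sub_mul_cos_pos {x : ℝ} (hx0 : x ≠ 0) (hxπ : |x| < Real.pi) :
    0 < Real.sin x * (Real.sin x - x * Real.cos x) := by
  rw [← sin_mul_sin_sub_mul_cos_abs]
  have habs : 0 < |x| := abs_pos.mpr hx0
  exact mul_pos (Real.sin_pos_of_pos_of_lt_pi habs hxπ) (sub_pos.mpr (mul_cos_lt_sin habs hxπ))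

theorem sum_mul_pos_of_exists_pos {ι R : Type*} [Semiring R] [PartialOrder R]
    [IsStrictOrderedRing R] {s : Finset ι} {a c : ι → R} (ha : ∀ i ∈ s, 0 ≤ a i)
    (ha' : ∃ i ∈ s, 0 < a i) (hc : ∀ i ∈ s, 0 < c i) : 0 < ∑ i ∈ s, a i * c i := by
  obtain ⟨k, hks, hk⟩ := ha'
  exact sum_pos' (fun i hi => mul_nonneg (ha i hi) (hc i hi).le) ⟨k, hks, mul_pos hk (hc k hks)⟩

theorem abs_mul_lt_of_abs_lt_div {K : Type*} [Field K] [LinearOrder K] [IsStrictOrderedRing K]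
    {x y w c : K} (hx : 0 < x) (hxy : x ≤ y) (hw : |w| < c / y) : |x * w| < c :=
  calc |x * w| = x * |w| := by rw [abs_mul, abs_of_pos hx]
    _ ≤ y * |w| := mul_le_mul_of_nonneg_right hxy (abs_nonneg w)
    _ < c := (lt_div_iff₀' (hx.trans_le hxy)).mp hw

theorem Jdet_prefactor_pos {d : ℕ} {α : Fin d → ℝ} (hα : ∀ i, α i ≠ 0) {w : ℝ} (hw0 : w ≠ 0) :
    0 < (2 : ℝ) ^ (2 * d) / ((∏ i, α i) ^ 2 * w ^ (2 * d + 2)) := by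
  have hprod : 0 < (∏ i, α i) ^ 2 := sq_pos_of_ne_zero (prod_ne_zero_iff.mpr fun i _ => hα i)
  have hpow : 0 < w ^ (2 * d + 2) := Even.pow_pos ⟨d + 1, by ring⟩ hw0
  positivity

theorem Jdet_pos_general {d : ℕ} {α : Fin d → ℝ} (hα : ∀ i, α i ≠ 0)
    {a : Fin d → ℝ} (ha : ∀ i, 0 ≤ a i) (ha' : ∃ i, 0 < a i)
    {w : ℝ} (hw0 : w ≠ 0) (hw : ∀ i, |α i * w| < 2 * Real.pi) :
    0 < Jdet d α a w := by
  have hfactor (i : Fin d) : 0 < Real.sin (α i * w / 2) *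
      (Real.sin (α i * w / 2) - α i * w / 2 * Real.cos (α i * w / 2)) := by
    refine sin_mul_sin_sub_mul_cos_pos (div_ne_zero (mul_ne_zero (hα i) hw0) two_ne_zero) ?_
    rw [abs_div, abs_two]
    linarith [hw i]
  have hprod (i : Fin d) : 0 < ∏ j ∈ univ.erase i, Real.sin (α j * w / 2) ^ 2 :=
    prod_pos fun j _ => sq_pos_of_ne_zero (left_ne_zero_of_mul (hfactor j).ne')
  refine mul_pos (Jdet_prefactor_pos hα hw0) ?_
  simp only [mul_assoc (a _), mul_assoc (∏ _ ∈ _, _)]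
  exact sum_mul_pos_of_exists_pos (fun i _ => ha i) (by simpa using ha')
    fun i _ => mul_pos (hprod i) (hfactor i)

/-- Positivity of the Jacobian determinant on the cotangent injectivity domain:
if `a i ≥ 0` with some `a i > 0` and `0 < |w| < 2π / α_d`, then `J(a, w) > 0`. -/
theorem Jdet_pos (d : ℕ) (hd : 1 ≤ d) (α : Fin d → ℝ)
    (hα : ∀ i, 0 < α i) (hmono : Monotone α)
    (a : Fin d → ℝ) (ha : ∀ i, 0 ≤ a i) (ha' : ∃ i, 0 < a i)
    (w : ℝ) (hw0 : w ≠ 0)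
    (hw : |w| < 2 * Real.pi / α ⟨d - 1, Nat.sub_lt hd one_pos⟩) :
    0 < Jdet d α a w :=
  Jdet_pos_general (fun i => (hα i).ne') ha ha' hw0 fun i =>
    abs_mul_lt_of_abs_lt_div (hα i) (hmono (Nat.le_sub_one_of_lt i.isLt)) hw
end

section
/- For every point (p, w) ∈ ℝ^k × ℝ with w ≠ 0, the map Exp is differentiable at (p, w), and the determinant of its differential (a linear endomorphism of ℝ^k × ℝ ≅ ℝ^{k+1}) equals (2^{2d}/(α²·w^{2d+2})) · Σ_{i=1}^d ‖pⁱ‖² · (∏_{j≠i} sin²(α_j·w/2)) · sin(α_i·w/2) · (sin(α_i·w/2) − (α_i·w/2)·cos(α_i·w/2)), where α := ∏_{i=1}^d α_i. -/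
open Finset

/-- The phase space `ℝ^k × ℝ` of a corank-1 Carnot group, written in blocks
`(p⁰, p¹, …, p^d, w)` with `p⁰ ∈ ℝ^{k-2d}`, `pⁱ ∈ ℝ²` and `w ∈ ℝ`. -/
abbrev E (d k : ℕ) : Type := (Fin (k - 2 * d) → ℝ) × (Fin d → ℝ × ℝ) × ℝ

/-- The matrix `J₂ = [[0,1],[-1,0]]` acting on `ℝ²`. -/
def J2 (v : ℝ × ℝ) : ℝ × ℝ := (v.2, -v.1)

/-- The sub-Riemannian exponential map at the identity of a corank-1 Carnot group,
in exponential coordinates. -/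
noncomputable def ExpMap (d k : ℕ) (α : Fin d → ℝ) (q : E d k) : E d k :=
  if q.2.2 = 0 then (q.1, q.2.1, 0)
  else
    (q.1,
     fun i =>
       (Real.sin (α i * q.2.2) / (α i * q.2.2)) • q.2.1 i +
         ((Real.cos (α i * q.2.2) - 1) / (α i * q.2.2)) • J2 (q.2.1 i),
     ∑ i, ((q.2.1 i).1 ^ 2 + (q.2.1 i).2 ^ 2) *
       (α i * q.2.2 - Real.sin (α i * q.2.2)) / (2 * α i * q.2.2 ^ 2))

/-!
In the blocks `pⁱ` the exponential map acts, for fixed `w`, by the similarities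
`aᵢ(w) + bᵢ(w) J₂`, and its last component is `∑ᵢ ‖pⁱ‖² cᵢ(w)`. Its differential is thus a block
diagonal matrix of planar similarities bordered by one row and one column. A Schur complement
evaluates the determinant, and since `(a + b J₂)ᵀ (a' + b' J₂)` has symmetric part `a a' + b b'`,
only the squared dilations `ρᵢ = aᵢ² + bᵢ²` survive:
`∑ᵢ ‖pⁱ‖² (cᵢ' ρᵢ - cᵢ ρᵢ') ∏_{j ≠ i} ρⱼ`. If some `ρᵢ` vanishes then the whole `i`-th similarity
does, and both sides are zero. For the exponential map `ρᵢ = (2 sin (αᵢ w / 2) / (αᵢ w))²`.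
-/

section Bordered

variable {R U : Type*} [CommRing R] [AddCommGroup U] [Module R U]

/-- The endomorphism of `U × R` with block matrix `[[A, v], [l, c]]`: the map `A` bordered by the
column `v`, the row `l` and the corner `c`. -/
def borderedMap (A : U →ₗ[R] U) (v : U) (l : U →ₗ[R] R) (c : R) : U × R →ₗ[R] U × R :=
  (A.coprod (LinearMap.toSpanSingleton R U v)).prod (l.coprod (LinearMap.toSpanSingleton R R c))

theorem borderedMap_apply (A : U →ₗ[R] U) (v : U) (l : U →ₗ[R] R) (c : R) (q : U × R) :
    borderedMap A v l c q = (A q.1 + q.2 • v, l q.1 + q.2 * c) :=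
  rfl

variable [Module.Free R U] [Module.Finite R U]

theorem det_borderedMap_of_comp_eq_id {A B : U →ₗ[R] U} (hAB : A ∘ₗ B = LinearMap.id) (v : U)
    (l : U →ₗ[R] R) (c : R) :
    LinearMap.det (borderedMap A v l c) = LinearMap.det A * (c - l (B v)) := by
  have factorization : borderedMap A v l c = A.prodMap LinearMap.id ∘ₗ
      LinearMap.transvection (l ∘ₗ LinearMap.fst R U R) (0, 1) ∘ₗ
      LinearMap.transvection (LinearMap.snd R U R) (B v, c - l (B v) - 1) := by
    have hABv : A (B v) = v := LinearMap.congr_fun hAB v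
    ext <;> simp [borderedMap_apply, LinearMap.transvection.apply, hABv]
  simp [factorization, LinearMap.det_comp, LinearMap.det_prodMap]

theorem det_borderedMap_eq_zero [IsDomain R] {A : U →ₗ[R] U} {l : U →ₗ[R] R} {u : U} (hu : u ≠ 0)
    (hA : A u = 0) (hl : l u = 0) (v : U) (c : R) :
    LinearMap.det (borderedMap A v l c) = 0 := by
  refine LinearMap.det_eq_zero_iff_ker_ne_bot.2 ((Submodule.ne_bot_iff _).2 ⟨(u, 0), ?_, ?_⟩)
  · simp [borderedMap_apply, hA, hl]
  · simpa using hu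

end Bordered

section PlanarSimilarity

/-- The linear map `a + b J₂` of the plane, a similarity of squared ratio `a² + b²`. -/
def planarSimilarity (a b : ℝ) : ℝ × ℝ →ₗ[ℝ] ℝ × ℝ :=
  a • LinearMap.id + b • (LinearMap.snd ℝ ℝ ℝ).prod (-LinearMap.fst ℝ ℝ ℝ)

theorem planarSimilarity_apply (a b : ℝ) (u : ℝ × ℝ) :
    planarSimilarity a b u = (a * u.1 + b * u.2, a * u.2 - b * u.1) := by
  simp [planarSimilarity, Prod.ext_iff, sub_eq_add_neg]

theorem det_planarSimilarity (a b : ℝ) :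
    LinearMap.det (planarSimilarity a b) = a ^ 2 + b ^ 2 := by
  rw [← LinearMap.det_toMatrix (Module.Basis.finTwoProd ℝ), Matrix.det_fin_two]
  suffices a * a + b * b = a ^ 2 + b ^ 2 by
    simpa [LinearMap.toMatrix_apply, planarSimilarity_apply] using this
  ring

theorem planarSimilarity_eq_zero {a b : ℝ} (h : a ^ 2 + b ^ 2 = 0) : planarSimilarity a b = 0 := by
  obtain ⟨ha, hb⟩ : a = 0 ∧ b = 0 := by
    simpa [add_eq_zero_iff_of_nonneg, sq_nonneg] using h
  simp [planarSimilarity, ha, hb]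

theorem planarSimilarity_comp_conj {a b : ℝ} (h : a ^ 2 + b ^ 2 ≠ 0) :
    planarSimilarity a b ∘ₗ planarSimilarity (a / (a ^ 2 + b ^ 2)) (-b / (a ^ 2 + b ^ 2)) =
      LinearMap.id := by
  ext <;> simp [planarSimilarity_apply] <;> field_simp <;> ring

/-- The scalar product with `n` on the plane. The type `ℝ × ℝ` carries the sup norm, so it has no
inner product in the library. -/
def planarDot (n : ℝ × ℝ) : ℝ × ℝ →ₗ[ℝ] ℝ :=
  n.1 • LinearMap.fst ℝ ℝ ℝ + n.2 • LinearMap.snd ℝ ℝ ℝ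

theorem planarDot_apply (n u : ℝ × ℝ) : planarDot n u = n.1 * u.1 + n.2 * u.2 :=
  rfl

theorem planarDot_planarSimilarity_conj (a b : ℝ) (n u : ℝ × ℝ) :
    planarDot n (planarSimilarity a (-b) u) = planarDot (planarSimilarity a b n) u := by
  simp only [planarDot_apply, planarSimilarity_apply]
  ring

theorem exists_ne_zero_planarDot_eq_zero (n : ℝ × ℝ) : ∃ u ≠ 0, planarDot n u = 0 := by
  rcases eq_or_ne n 0 with rfl | hn
  · exact ⟨(1, 0), by simp, by simp [planarDot_apply]⟩
  · refine ⟨J2 n, ?_, by rw [planarDot_apply, J2]; ring⟩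
    simpa [J2, Prod.ext_iff, and_comm] using hn

variable {ι : Type*}

/-- The block diagonal map of `(ℝ²)^ι` with blocks `aᵢ + bᵢ J₂`. -/
def blockSimilarity (a b : ι → ℝ) : (ι → ℝ × ℝ) →ₗ[ℝ] (ι → ℝ × ℝ) :=
  LinearMap.pi fun i => planarSimilarity (a i) (b i) ∘ₗ LinearMap.proj i

theorem blockSimilarity_apply (a b : ι → ℝ) (u : ι → ℝ × ℝ) (i : ι) :
    blockSimilarity a b u i = planarSimilarity (a i) (b i) (u i) :=
  rfl

variable [Fintype ι]

/-- The scalar product with `n` on `(ℝ²)^ι`. -/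
def blockDot (n : ι → ℝ × ℝ) : (ι → ℝ × ℝ) →ₗ[ℝ] ℝ :=
  ∑ i, planarDot (n i) ∘ₗ LinearMap.proj i

theorem det_blockSimilarity (a b : ι → ℝ) :
    LinearMap.det (blockSimilarity a b) = ∏ i, (a i ^ 2 + b i ^ 2) := by
  simp only [blockSimilarity, LinearMap.det_pi, det_planarSimilarity]

theorem blockDot_apply (n u : ι → ℝ × ℝ) : blockDot n u = ∑ i, planarDot (n i) (u i) := by
  simp [blockDot]

theorem det_borderedMap_blockSimilarity_of_eq_zero {a b : ι → ℝ} {i : ι}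
    (hi : planarSimilarity (a i) (b i) = 0) (v n : ι → ℝ × ℝ) (c : ℝ) :
    LinearMap.det (borderedMap (blockSimilarity a b) v (blockDot n) c) = 0 := by
  classical
  obtain ⟨u, hu, hnu⟩ := exists_ne_zero_planarDot_eq_zero (n i)
  have map_single : blockSimilarity a b (Pi.single i u) = 0 := by
    funext j
    rcases eq_or_ne j i with rfl | hj
    · simp [blockSimilarity_apply, hi]
    · simp [blockSimilarity_apply, hj]
  have dot_single : blockDot n (Pi.single i u) = 0 := by
    rw [blockDot_apply, sum_eq_single i (fun j _ hj => by simp [hj]) (by simp)]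
    simpa using hnu
  exact det_borderedMap_eq_zero (by simpa using hu) map_single dot_single v c

variable [DecidableEq ι]

theorem det_borderedMap_blockSimilarity_of_ne_zero {a b : ι → ℝ} (h : ∀ i, a i ^ 2 + b i ^ 2 ≠ 0)
    (v n : ι → ℝ × ℝ) (c : ℝ) :
    LinearMap.det (borderedMap (blockSimilarity a b) v (blockDot n) c) =
      c * ∏ i, (a i ^ 2 + b i ^ 2) -
        ∑ i, planarDot (planarSimilarity (a i) (b i) (n i)) (v i) *
          ∏ j ∈ univ.erase i, (a j ^ 2 + b j ^ 2) := by
  have right_inverse : blockSimilarity a b ∘ₗ blockSimilarity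
      (fun i => a i / (a i ^ 2 + b i ^ 2)) (fun i => -b i / (a i ^ 2 + b i ^ 2)) =
      LinearMap.id := by
    refine LinearMap.ext fun u => funext fun i => ?_
    exact LinearMap.congr_fun (planarSimilarity_comp_conj (h i)) (u i)
  rw [det_borderedMap_of_comp_eq_id right_inverse, det_blockSimilarity, blockDot_apply, mul_sub,
    mul_comm, mul_sum]
  refine congrArg _ (sum_congr rfl fun i _ => ?_)
  have hdot := planarDot_planarSimilarity_conj (a i / (a i ^ 2 + b i ^ 2))
    (b i / (a i ^ 2 + b i ^ 2)) (n i) (v i)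
  rw [blockSimilarity_apply, neg_div, hdot, ← mul_prod_erase univ _ (mem_univ i)]
  have := h i
  simp only [planarDot_apply, planarSimilarity_apply]
  field_simp

theorem det_borderedMap_blockSimilarity (a b : ι → ℝ) (v n : ι → ℝ × ℝ) (c : ℝ) :
    LinearMap.det (borderedMap (blockSimilarity a b) v (blockDot n) c) =
      c * ∏ i, (a i ^ 2 + b i ^ 2) -
        ∑ i, planarDot (planarSimilarity (a i) (b i) (n i)) (v i) *
          ∏ j ∈ univ.erase i, (a j ^ 2 + b j ^ 2) := by
  by_cases h : ∀ i, a i ^ 2 + b i ^ 2 ≠ 0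
  · exact det_borderedMap_blockSimilarity_of_ne_zero h v n c
  obtain ⟨i, hi⟩ : ∃ i, a i ^ 2 + b i ^ 2 = 0 := by simpa using h
  have block_eq_zero := planarSimilarity_eq_zero hi
  have summand_eq_zero (j : ι) : planarDot (planarSimilarity (a j) (b j) (n j)) (v j) *
      ∏ k ∈ univ.erase j, (a k ^ 2 + b k ^ 2) = 0 := by
    rcases eq_or_ne i j with rfl | hij
    · simp [block_eq_zero, planarDot_apply]
    · rw [prod_eq_zero (mem_erase.2 ⟨hij, mem_univ i⟩) hi, mul_zero]
  rw [det_borderedMap_blockSimilarity_of_eq_zero block_eq_zero, prod_eq_zero (mem_univ i) hi,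
    sum_eq_zero fun j _ => summand_eq_zero j, mul_zero, sub_zero]

end PlanarSimilarity

section TwistMap

variable {ι : Type*} [Fintype ι]

/-- The map `(u, w) ↦ ((aᵢ(w) uᵢ + bᵢ(w) J₂ uᵢ)ᵢ, ∑ᵢ ‖uᵢ‖² cᵢ(w))` of `(ℝ²)^ι × ℝ`, which is the
shape of the exponential map away from `w = 0`. -/
def twistMap (a b c : ι → ℝ → ℝ) (q : (ι → ℝ × ℝ) × ℝ) : (ι → ℝ × ℝ) × ℝ :=
  (fun i => a i q.2 • q.1 i + b i q.2 • J2 (q.1 i),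
    ∑ i, ((q.1 i).1 ^ 2 + (q.1 i).2 ^ 2) * c i q.2)

variable {a b c : ι → ℝ → ℝ} {a' b' c' : ι → ℝ} {w : ℝ}

theorem hasFDerivAt_twistMap (ha : ∀ i, HasDerivAt (a i) (a' i) w)
    (hb : ∀ i, HasDerivAt (b i) (b' i) w) (hc : ∀ i, HasDerivAt (c i) (c' i) w)
    (p : ι → ℝ × ℝ) :
    HasFDerivAt (twistMap a b c)
      (borderedMap (blockSimilarity (a · w) (b · w)) (blockSimilarity a' b' p)
        (blockDot fun i => (2 * c i w) • p i)
        (∑ i, ((p i).1 ^ 2 + (p i).2 ^ 2) * c' i)).toContinuousLinearMap (p, w) := by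
  have hw : HasFDerivAt (fun q : (ι → ℝ × ℝ) × ℝ => q.2) (.snd ℝ _ _) (p, w) := hasFDerivAt_snd
  have hA i := (ha i).comp_hasFDerivAt (p, w) hw
  have hB i := (hb i).comp_hasFDerivAt (p, w) hw
  have hC i := (hc i).comp_hasFDerivAt (p, w) hw
  have hu i : HasFDerivAt (fun q : (ι → ℝ × ℝ) × ℝ => q.1 i)
      (ContinuousLinearMap.proj i ∘L .fst ℝ _ _) (p, w) :=
    (ContinuousLinearMap.proj i ∘L .fst ℝ (ι → ℝ × ℝ) ℝ).hasFDerivAt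
  have hJu i : HasFDerivAt (fun q : (ι → ℝ × ℝ) × ℝ => J2 (q.1 i)) _ (p, w) :=
    (hu i).snd.prodMk (hu i).fst.neg
  have blocks := hasFDerivAt_pi.2 fun i => ((hA i).smul (hu i)).add ((hB i).smul (hJu i))
  have height := HasFDerivAt.fun_sum (u := univ) fun i _ =>
    (((hu i).fst.pow 2).add ((hu i).snd.pow 2)).mul (hC i)
  refine (blocks.prodMk height).congr_fderiv (ContinuousLinearMap.ext fun q => Prod.ext ?_ ?_)
  · funext i
    ext <;> simp [borderedMap_apply, blockSimilarity_apply, planarSimilarity_apply, J2] <;> ring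
  · simp only [ContinuousLinearMap.prod_apply, _root_.sum_apply,
      LinearMap.coe_toContinuousLinearMap', borderedMap_apply, blockDot_apply, mul_sum,
      ← sum_add_distrib]
    refine sum_congr rfl fun i _ => ?_
    simp [planarDot_apply]
    ring

theorem det_fderiv_twistMap [DecidableEq ι] (ha : ∀ i, DifferentiableAt ℝ (a i) w)
    (hb : ∀ i, DifferentiableAt ℝ (b i) w) (hc : ∀ i, DifferentiableAt ℝ (c i) w)
    (p : ι → ℝ × ℝ) :
    (fderiv ℝ (twistMap a b c) (p, w)).det =
      ∑ i, ((p i).1 ^ 2 + (p i).2 ^ 2) *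
        (deriv (c i) w * (a i w ^ 2 + b i w ^ 2) -
          c i w * deriv (fun t => a i t ^ 2 + b i t ^ 2) w) *
        ∏ j ∈ univ.erase i, (a j w ^ 2 + b j w ^ 2) := by
  have deriv_dilation i : deriv (fun t => a i t ^ 2 + b i t ^ 2) w =
      2 * (a i w * deriv (a i) w + b i w * deriv (b i) w) := by
    rw [(((ha i).hasDerivAt.fun_pow 2).fun_add ((hb i).hasDerivAt.fun_pow 2)).deriv]
    simp only [Nat.cast_ofNat, Nat.add_one_sub_one, pow_one]
    ring
  rw [(hasFDerivAt_twistMap (fun i => (ha i).hasDerivAt) (fun i => (hb i).hasDerivAt)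
      (fun i => (hc i).hasDerivAt) p).fderiv,
    ContinuousLinearMap.det, LinearMap.coe_toContinuousLinearMap, det_borderedMap_blockSimilarity,
    sum_mul, ← sum_sub_distrib]
  refine sum_congr rfl fun i _ => ?_
  rw [← mul_prod_erase univ _ (mem_univ i), deriv_dilation]
  simp only [blockSimilarity_apply, planarDot_apply, planarSimilarity_apply, Prod.smul_fst,
    Prod.smul_snd, smul_eq_mul]
  ring

end TwistMap

section ExpProfile

open Real

/-- The coefficient of `pⁱ` in the `i`-th block of the exponential map, with `α = αᵢ`. -/
noncomputable def expScale (α w : ℝ) : ℝ :=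
  sin (α * w) / (α * w)

/-- The coefficient of `J₂ pⁱ` in the `i`-th block of the exponential map, with `α = αᵢ`. -/
noncomputable def expTwist (α w : ℝ) : ℝ :=
  (cos (α * w) - 1) / (α * w)

/-- The coefficient of `‖pⁱ‖²` in the last component of the exponential map, with `α = αᵢ`. -/
noncomputable def expHeight (α w : ℝ) : ℝ :=
  (α * w - sin (α * w)) / (2 * α * w ^ 2)

theorem sin_eq_two_mul_half (x : ℝ) : sin x = 2 * sin (x / 2) * cos (x / 2) := by
  rw [← sin_two_mul, mul_div_cancel₀ x two_ne_zero]

theorem cos_eq_one_sub_half (x : ℝ) : cos x = 1 - 2 * sin (x / 2) ^ 2 := by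
  rw [← cos_two_mul_eq_one_sub, mul_div_cancel₀ x two_ne_zero]

theorem expScale_sq_add_expTwist_sq (α w : ℝ) :
    expScale α w ^ 2 + expTwist α w ^ 2 = 4 / (α * w) ^ 2 * sin (α * w / 2) ^ 2 := by
  rw [expScale, expTwist, sin_eq_two_mul_half (α * w), cos_eq_one_sub_half (α * w)]
  linear_combination 4 * sin (α * w / 2) ^ 2 / (α * w) ^ 2 * sin_sq_add_cos_sq (α * w / 2)

variable {α w : ℝ}

theorem differentiableAt_expScale (hα : α ≠ 0) (hw : w ≠ 0) :
    DifferentiableAt ℝ (expScale α) w := by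
  unfold expScale
  fun_prop (disch := positivity)

theorem differentiableAt_expTwist (hα : α ≠ 0) (hw : w ≠ 0) :
    DifferentiableAt ℝ (expTwist α) w := by
  unfold expTwist
  fun_prop (disch := positivity)

-- The factor `w⁻²` of the height and of the squared dilation contributes the terms `-2 / w * _`
-- to the two derivatives below; in this form they visibly cancel in the Wronskian.
theorem hasDerivAt_expHeight (hα : α ≠ 0) (hw : w ≠ 0) :
    HasDerivAt (expHeight α) (sin (α * w / 2) ^ 2 / w ^ 2 - 2 / w * expHeight α w) w := by
  have hlin : HasDerivAt (fun t => α * t) α w := hasDerivAt_const_mul α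
  have hden : HasDerivAt (fun t => 2 * α * t ^ 2) (2 * α * (2 * w)) w := by
    simpa using (hasDerivAt_pow 2 w).const_mul (2 * α)
  refine ((hlin.fun_sub hlin.sin).fun_div hden (by positivity)).congr_deriv ?_
  rw [expHeight, cos_eq_one_sub_half]
  field_simp
  ring

theorem hasDerivAt_expScale_sq_add_expTwist_sq (hα : α ≠ 0) (hw : w ≠ 0) :
    HasDerivAt (fun t => expScale α t ^ 2 + expTwist α t ^ 2)
      (4 / (α * w ^ 2) * sin (α * w / 2) * cos (α * w / 2) -
        2 / w * (expScale α w ^ 2 + expTwist α w ^ 2)) w := by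
  have hlin : HasDerivAt (fun t => α * t) α w := hasDerivAt_const_mul α
  simp only [expScale_sq_add_expTwist_sq]
  refine (((hasDerivAt_const w (4 : ℝ)).fun_div (hlin.fun_pow 2) (by positivity)).fun_mul
    ((hlin.div_const 2).sin.fun_pow 2)).congr_deriv ?_
  field_simp
  ring

theorem deriv_expHeight_mul_sub_expHeight_mul_deriv (hα : α ≠ 0) (hw : w ≠ 0) :
    deriv (expHeight α) w * (expScale α w ^ 2 + expTwist α w ^ 2) -
        expHeight α w * deriv (fun t => expScale α t ^ 2 + expTwist α t ^ 2) w =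
      4 / (α * w) ^ 2 / w ^ 2 *
        (sin (α * w / 2) * (sin (α * w / 2) - α * w / 2 * cos (α * w / 2))) := by
  rw [(hasDerivAt_expHeight hα hw).deriv, (hasDerivAt_expScale_sq_add_expTwist_sq hα hw).deriv,
    expScale_sq_add_expTwist_sq, expHeight, sin_eq_two_mul_half (α * w)]
  field_simp
  linear_combination 2 * α * w * sin (α * w / 2) ^ 2 * sin_sq_add_cos_sq (α * w / 2)

end ExpProfile

section BlockExp

variable {ι : Type*} [Fintype ι] {α : ι → ℝ} {w : ℝ}

/-- The components `(x¹, …, x^d, z)` of the exponential map as a function of `(p¹, …, p^d, w)`, for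
an arbitrary finite index set of planes. It agrees with the exponential map only for `w ≠ 0`, since
at `w = 0` the divisions by zero return `0`. -/
noncomputable def blockExp (α : ι → ℝ) : (ι → ℝ × ℝ) × ℝ → (ι → ℝ × ℝ) × ℝ :=
  twistMap (fun i => expScale (α i)) (fun i => expTwist (α i)) (fun i => expHeight (α i))

theorem differentiableAt_blockExp (hα : ∀ i, α i ≠ 0) (p : ι → ℝ × ℝ) (hw : w ≠ 0) :
    DifferentiableAt ℝ (blockExp α) (p, w) :=
  (hasFDerivAt_twistMap (fun i => (differentiableAt_expScale (hα i) hw).hasDerivAt)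
    (fun i => (differentiableAt_expTwist (hα i) hw).hasDerivAt)
    (fun i => hasDerivAt_expHeight (hα i) hw) p).differentiableAt

theorem prod_four_div_sq_div_sq (α : ι → ℝ) (w : ℝ) :
    (∏ i, 4 / (α i * w) ^ 2) / w ^ 2 =
      2 ^ (2 * Fintype.card ι) / ((∏ i, α i) ^ 2 * w ^ (2 * Fintype.card ι + 2)) := by
  have four_pow : (4 : ℝ) ^ Fintype.card ι = 2 ^ (2 * Fintype.card ι) := by
    rw [pow_mul]
    norm_num
  simp only [prod_div_distrib, prod_pow, prod_mul_distrib, prod_const, card_univ]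
  rw [div_div, four_pow]
  ring

theorem det_fderiv_blockExp [DecidableEq ι] (hα : ∀ i, α i ≠ 0) (p : ι → ℝ × ℝ) (hw : w ≠ 0) :
    (fderiv ℝ (blockExp α) (p, w)).det =
      2 ^ (2 * Fintype.card ι) / ((∏ i, α i) ^ 2 * w ^ (2 * Fintype.card ι + 2)) *
        ∑ i, ((p i).1 ^ 2 + (p i).2 ^ 2) *
          (∏ j ∈ univ.erase i, Real.sin (α j * w / 2) ^ 2) *
          Real.sin (α i * w / 2) *
          (Real.sin (α i * w / 2) - α i * w / 2 * Real.cos (α i * w / 2)) := by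
  rw [blockExp, det_fderiv_twistMap (fun i => differentiableAt_expScale (hα i) hw)
    (fun i => differentiableAt_expTwist (hα i) hw)
    (fun i => (hasDerivAt_expHeight (hα i) hw).differentiableAt),
    ← prod_four_div_sq_div_sq, mul_sum]
  refine sum_congr rfl fun i _ => ?_
  rw [deriv_expHeight_mul_sub_expHeight_mul_deriv (hα i) hw]
  simp only [expScale_sq_add_expTwist_sq]
  rw [prod_mul_distrib, ← mul_prod_erase univ _ (mem_univ i)]
  ring

end BlockExp

section ExpMap

variable {d k : ℕ} {α : Fin d → ℝ} {w : ℝ}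

theorem ExpMap_of_ne_zero {q : E d k} (hq : q.2.2 ≠ 0) :
    ExpMap d k α q = Prod.map id (blockExp α) q := by
  simp only [ExpMap, if_neg hq, mul_div_assoc]
  rfl

theorem hasFDerivAt_ExpMap (hα : ∀ i, α i ≠ 0) (p0 : Fin (k - 2 * d) → ℝ) (p : Fin d → ℝ × ℝ)
    (hw : w ≠ 0) :
    HasFDerivAt (ExpMap d k α)
      ((ContinuousLinearMap.id ℝ (Fin (k - 2 * d) → ℝ)).prodMap (fderiv ℝ (blockExp α) (p, w)))
      (p0, p, w) := by
  have eventually_ne : ∀ᶠ q : E d k in nhds (p0, p, w), q.2.2 ≠ 0 :=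
    ContinuousAt.eventually_ne (by fun_prop) hw
  refine HasFDerivAt.congr_of_eventuallyEq ?_ (eventually_ne.mono fun q => ExpMap_of_ne_zero)
  exact HasFDerivAt.prodMap (p0, p, w) (hasFDerivAt_id p0)
    (differentiableAt_blockExp hα p hw).hasFDerivAt

end ExpMap

theorem ExpMap_jacobian_general (d k : ℕ) (α : Fin d → ℝ) (hα : ∀ i, α i ≠ 0)
    (p0 : Fin (k - 2 * d) → ℝ) (p : Fin d → ℝ × ℝ) (w : ℝ) (hw : w ≠ 0) :
    DifferentiableAt ℝ (ExpMap d k α) (p0, p, w) ∧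
    LinearMap.det (fderiv ℝ (ExpMap d k α) (p0, p, w) : E d k →ₗ[ℝ] E d k) =
      2 ^ (2 * d) / ((∏ i, α i) ^ 2 * w ^ (2 * d + 2)) *
        ∑ i, ((p i).1 ^ 2 + (p i).2 ^ 2) *
          (∏ j ∈ univ.erase i, Real.sin (α j * w / 2) ^ 2) *
          Real.sin (α i * w / 2) *
          (Real.sin (α i * w / 2) - α i * w / 2 * Real.cos (α i * w / 2)) := by
  have hExp := hasFDerivAt_ExpMap hα p0 p hw
  refine ⟨hExp.differentiableAt, ?_⟩
  rw [hExp.fderiv, ContinuousLinearMap.coe_prodMap, LinearMap.det_prodMap,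
    ContinuousLinearMap.coe_id, LinearMap.det_id, one_mul, ← ContinuousLinearMap.det,
    det_fderiv_blockExp hα p hw, Fintype.card_fin]

/-- Lemma 3.4 of the paper: for `w ≠ 0` the exponential map is differentiable at
`(p, w)` and the determinant of its differential is given by the explicit formula. -/
theorem ExpMap_jacobian (d k : ℕ) (hd : 1 ≤ d) (hk : 2 * d ≤ k)
    (α : Fin d → ℝ) (hα : ∀ i, 0 < α i) (hmono : Monotone α)
    (p0 : Fin (k - 2 * d) → ℝ) (p : Fin d → ℝ × ℝ) (w : ℝ) (hw : w ≠ 0) :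
    DifferentiableAt ℝ (ExpMap d k α) (p0, p, w) ∧
    LinearMap.det (fderiv ℝ (ExpMap d k α) (p0, p, w) : E d k →ₗ[ℝ] E d k) =
      2 ^ (2 * d) / ((∏ i, α i) ^ 2 * w ^ (2 * d + 2)) *
        ∑ i, ((p i).1 ^ 2 + (p i).2 ^ 2) *
          (∏ j ∈ univ.erase i, Real.sin (α j * w / 2) ^ 2) *
          Real.sin (α i * w / 2) *
          (Real.sin (α i * w / 2) - α i * w / 2 * Real.cos (α i * w / 2)) :=
  ExpMap_jacobian_general d k α (fun i => (hα i).ne') p0 p w hw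
end

section
/- Let (p, w) and (q, v) be two points of D such that ‖p‖ = ‖q‖ (Euclidean norms in ℝ^k) and Exp(p, w) = Exp(q, v). Then (p, w) = (q, v). In other words, Exp is injective on each sphere-slice of the cotangent injectivity domain D. -/
/-!
In the block `pⁱ`, a geodesic is a circular arc of angle `αᵢ w` with chord `xⁱ`, and it contributes
`αᵢ` times the area of the circular segment it cuts off to `z`. Expressing that area through the
chord instead of the initial covector gives `z = ∑ αᵢ ‖xⁱ‖² ρ(αᵢ w)`, where `ρ(t)` is the area of a
segment of angle `t` divided by its squared chord. Since `ρ` is odd and strictly increasing on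
`(-2π, 2π)`, the endpoint `(x, z)` determines `w` as soon as some `xⁱ` is nonzero. For fixed `w`,
each `pⁱ ↦ xⁱ` is an invertible similarity of the plane, so `p` is determined as well.
-/

open Real Set

section CircularSegment

theorem mul_cos_lt_sin_s7 {x : ℝ} (hx₀ : 0 < x) (hxπ : x < π) : x * cos x < sin x := by
  rcases lt_or_ge x (π / 2) with hx | hx
  · have hcos : 0 < cos x := cos_pos_of_mem_Ioo ⟨by linarith, hx⟩
    have htan : x < sin x / cos x := tan_eq_sin_div_cos x ▸ lt_tan hx₀ hx
    exact (lt_div_iff₀ hcos).1 htan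
  · have hcos : cos x ≤ 0 := cos_nonpos_of_pi_div_two_le_of_le hx (by linarith)
    exact (mul_nonpos_of_nonneg_of_nonpos hx₀.le hcos).trans_lt (sin_pos_of_pos_of_lt_pi hx₀ hxπ)

theorem cos_lt_one_of_abs_lt_two_pi {t : ℝ} (ht₀ : t ≠ 0) (ht : |t| < 2 * π) : cos t < 1 :=
  (cos_le_one t).lt_of_ne fun h =>
    ht₀ ((cos_eq_one_iff_of_lt_of_lt (abs_lt.1 ht).1 (abs_lt.1 ht).2).1 h)

theorem mul_sin_lt_two_mul_one_sub_cos {t : ℝ} (ht₀ : 0 < t) (ht : t < 2 * π) :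
    t * sin t < 2 * (1 - cos t) := by
  obtain ⟨s, rfl⟩ : ∃ s, t = 2 * s := ⟨t / 2, by ring⟩
  have hs₀ : 0 < s := by linarith
  have hsπ : s < π := by linarith
  have hsin : 0 < sin s := sin_pos_of_pos_of_lt_pi hs₀ hsπ
  calc 2 * s * sin (2 * s) = 4 * sin s * (s * cos s) := by rw [sin_two_mul]; ring
    _ < 4 * sin s * sin s := by gcongr; exact mul_cos_lt_sin_s7 hs₀ hsπ
    _ = 2 * (1 - cos (2 * s)) := by rw [cos_two_mul, cos_sq']; ring

/-- The area `(t - sin t) / 2` of the segment cut off by an arc of angle `t` of the unit circle,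
divided by its squared chord `2 * (1 - cos t)`. The junk value `0` at `t = 0` is also the limit. -/
noncomputable def segmentRatio (t : ℝ) : ℝ := (t - sin t) / (4 * (1 - cos t))

theorem segmentRatio_zero : segmentRatio 0 = 0 := by simp [segmentRatio]

theorem segmentRatio_neg (t : ℝ) : segmentRatio (-t) = -segmentRatio t := by
  simp only [segmentRatio, sin_neg, cos_neg]
  ring

theorem segmentRatio_pos {t : ℝ} (ht₀ : 0 < t) (ht : t < 2 * π) : 0 < segmentRatio t := by
  have hcos : cos t < 1 := cos_lt_one_of_abs_lt_two_pi ht₀.ne' (by rwa [abs_of_pos ht₀])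
  exact div_pos (sub_pos.2 (sin_lt ht₀)) (by linarith)

theorem hasDerivAt_segmentRatio {t : ℝ} (ht : cos t ≠ 1) :
    HasDerivAt segmentRatio ((2 * (1 - cos t) - t * sin t) / (4 * (1 - cos t) ^ 2)) t := by
  have hden : 1 - cos t ≠ 0 := sub_ne_zero.2 ht.symm
  have hnum : HasDerivAt (fun t => t - sin t) (1 - cos t) t :=
    (hasDerivAt_id t).sub (hasDerivAt_sin t)
  have hchord : HasDerivAt (fun t => 4 * (1 - cos t)) (4 * sin t) t := by
    simpa using ((hasDerivAt_cos t).const_sub 1).const_mul 4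
  refine (hnum.div hchord (mul_ne_zero four_ne_zero hden)).congr_deriv ?_
  field_simp
  linear_combination sin_sq_add_cos_sq t

theorem deriv_segmentRatio_pos {t : ℝ} (ht₀ : 0 < t) (ht : t < 2 * π) :
    0 < deriv segmentRatio t := by
  have hcos : cos t < 1 := cos_lt_one_of_abs_lt_two_pi ht₀.ne' (by rwa [abs_of_pos ht₀])
  rw [(hasDerivAt_segmentRatio hcos.ne).deriv]
  exact div_pos (sub_pos.2 (mul_sin_lt_two_mul_one_sub_cos ht₀ ht))
    (mul_pos four_pos (pow_pos (sub_pos.2 hcos) 2))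

theorem strictMonoOn_segmentRatio_Ico : StrictMonoOn segmentRatio (Ico 0 (2 * π)) := by
  have hderiv {t : ℝ} (ht : t ∈ Ioo 0 (2 * π)) : 0 < deriv segmentRatio t :=
    deriv_segmentRatio_pos ht.1 ht.2
  have hmono : StrictMonoOn segmentRatio (Ioo 0 (2 * π)) :=
    strictMonoOn_of_deriv_pos (convex_Ioo 0 (2 * π))
      (fun t ht =>
        (differentiableAt_of_deriv_ne_zero (hderiv ht).ne').continuousAt.continuousWithinAt)
      (fun t ht => hderiv (interior_subset ht))
  intro s hs t ht hst
  rcases hs.1.eq_or_lt with rfl | hs₀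
  · rw [segmentRatio_zero]
    exact segmentRatio_pos hst ht.2
  · exact hmono ⟨hs₀, hs.2⟩ ⟨hs₀.trans hst, ht.2⟩ hst

theorem strictMonoOn_Ioo_of_odd_of_strictMonoOn_Ico {G H : Type*}
    [AddCommGroup G] [LinearOrder G] [IsOrderedAddMonoid G]
    [AddCommGroup H] [PartialOrder H] [IsOrderedAddMonoid H] {f : G → H} {b : G}
    (hodd : ∀ x, f (-x) = -f x) (hmono : StrictMonoOn f (Ico 0 b)) :
    StrictMonoOn f (Ioo (-b) b) := by
  rcases le_or_gt b 0 with hb | hb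
  · rw [Ioo_eq_empty (not_lt.2 (hb.trans (neg_nonneg.2 hb)))]
    exact subsingleton_empty.strictMonoOn f
  have hneg : StrictMonoOn f (Ioc (-b) 0) := by
    intro x hx y hy hxy
    have h := hmono ⟨neg_nonneg.2 hy.2, neg_lt.1 hy.1⟩ ⟨neg_nonneg.2 hx.2, neg_lt.1 hx.1⟩
      (neg_lt_neg hxy)
    rwa [hodd, hodd, neg_lt_neg_iff] at h
  rw [← Ioc_union_Ico_eq_Ioo (neg_lt_zero.2 hb) hb]
  exact hneg.union hmono (isGreatest_Ioc (neg_lt_zero.2 hb)) (isLeast_Ico hb)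

theorem strictMonoOn_segmentRatio : StrictMonoOn segmentRatio (Ioo (-(2 * π)) (2 * π)) :=
  strictMonoOn_Ioo_of_odd_of_strictMonoOn_Ico segmentRatio_neg strictMonoOn_segmentRatio_Ico

theorem mul_segmentRatio_mul_lt {a w v : ℝ} (ha : a ≠ 0) (hw : |a * w| < 2 * π)
    (hv : |a * v| < 2 * π) (hwv : w < v) :
    a * segmentRatio (a * w) < a * segmentRatio (a * v) := by
  rcases ha.lt_or_gt with ha | ha
  · exact mul_lt_mul_of_neg_left (strictMonoOn_segmentRatio (abs_lt.1 hv) (abs_lt.1 hw)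
      (mul_lt_mul_of_neg_left hwv ha)) ha
  · exact mul_lt_mul_of_pos_left (strictMonoOn_segmentRatio (abs_lt.1 hw) (abs_lt.1 hv)
      (mul_lt_mul_of_pos_left hwv ha)) ha

end CircularSegment

section PlanarBlock

/-- The squared Euclidean norm on `ℝ × ℝ`, whose Mathlib norm is the sup norm. -/
def sqNorm (u : ℝ × ℝ) : ℝ := u.1 ^ 2 + u.2 ^ 2

theorem sqNorm_nonneg (u : ℝ × ℝ) : 0 ≤ sqNorm u := by unfold sqNorm; positivity

theorem sqNorm_eq_zero {u : ℝ × ℝ} : sqNorm u = 0 ↔ u = 0 := by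
  rw [sqNorm, add_eq_zero_iff_of_nonneg (sq_nonneg _) (sq_nonneg _), sq_eq_zero_iff,
    sq_eq_zero_iff, Prod.ext_iff, Prod.fst_zero, Prod.snd_zero]

theorem sqNorm_pos {u : ℝ × ℝ} (hu : u ≠ 0) : 0 < sqNorm u :=
  (sqNorm_nonneg u).lt_of_ne' (sqNorm_eq_zero.not.2 hu)

/-- The `ℝ²`-block of the exponential map as a function of the angle `t = αᵢ w`. Using `sinc` makes
it the identity at `t = 0`, where `(cos t - 1) / t` has the junk value `0`. -/
noncomputable def arcChord (t : ℝ) : ℝ × ℝ →ₗ[ℝ] ℝ × ℝ where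
  toFun u := sinc t • u + ((cos t - 1) / t) • J2 u
  map_add' u u' := by ext <;> simp [J2] <;> ring
  map_smul' c u := by ext <;> simp [J2] <;> ring

theorem arcChord_apply (t : ℝ) (u : ℝ × ℝ) :
    arcChord t u = sinc t • u + ((cos t - 1) / t) • J2 u := rfl

theorem arcChord_zero (u : ℝ × ℝ) : arcChord 0 u = u := by simp [arcChord_apply]

theorem sq_mul_sqNorm_arcChord (t : ℝ) (u : ℝ × ℝ) :
    t ^ 2 * sqNorm (arcChord t u) = 2 * (1 - cos t) * sqNorm u := by
  rcases eq_or_ne t 0 with rfl | ht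
  · simp
  · simp only [arcChord_apply, sinc_of_ne_zero ht, sqNorm, J2, Prod.fst_add, Prod.snd_add,
      Prod.smul_fst, Prod.smul_snd, smul_eq_mul]
    field_simp
    linear_combination (u.1 ^ 2 + u.2 ^ 2) * sin_sq_add_cos_sq t

theorem arcChord_injective {t : ℝ} (ht : |t| < 2 * π) : Function.Injective (arcChord t) := by
  rcases eq_or_ne t 0 with rfl | ht₀
  · exact fun u u' h => by rwa [arcChord_zero, arcChord_zero] at h
  · refine (injective_iff_map_eq_zero _).2 fun u hu => sqNorm_eq_zero.1 ?_
    have hchord : 2 * (1 - cos t) * sqNorm u = 0 := by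
      rw [← sq_mul_sqNorm_arcChord, hu, sqNorm_eq_zero.2 rfl, mul_zero]
    have hcos : cos t < 1 := cos_lt_one_of_abs_lt_two_pi ht₀ ht
    exact (mul_eq_zero.1 hchord).resolve_left (by linarith)

theorem sqNorm_mul_div_eq_mul_segmentRatio {a w : ℝ} (ha : a ≠ 0) (hw₀ : w ≠ 0)
    (hw : |a * w| < 2 * π) (u : ℝ × ℝ) :
    sqNorm u * (a * w - sin (a * w)) / (2 * a * w ^ 2) =
      sqNorm (arcChord (a * w) u) * (a * segmentRatio (a * w)) := by
  have hcos : 1 - cos (a * w) ≠ 0 :=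
    (sub_pos.2 (cos_lt_one_of_abs_lt_two_pi (mul_ne_zero ha hw₀) hw)).ne'
  rw [segmentRatio]
  field_simp
  linear_combination -(2 * (a * w - sin (a * w))) * sq_mul_sqNorm_arcChord (a * w) u

end PlanarBlock

section Height

variable {ι : Type*} [Fintype ι] {α : ι → ℝ}

/-- The coordinate `z` of the endpoint of the geodesic with vertical covector `w` whose horizontal
endpoint has the `ℝ²`-blocks `x`. -/
noncomputable def heightOver (α : ι → ℝ) (x : ι → ℝ × ℝ) (w : ℝ) : ℝ :=
  ∑ i, sqNorm (x i) * (α i * segmentRatio (α i * w))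

theorem strictMonoOn_heightOver (hα : ∀ i, α i ≠ 0) {x : ι → ℝ × ℝ} (hx : x ≠ 0) :
    StrictMonoOn (heightOver α x) {w | ∀ i, |α i * w| < 2 * π} := by
  intro w hw v hv hwv
  have hlt (i : ι) : α i * segmentRatio (α i * w) < α i * segmentRatio (α i * v) :=
    mul_segmentRatio_mul_lt (hα i) (hw i) (hv i) hwv
  obtain ⟨j, hj⟩ := Function.ne_iff.1 hx
  exact Finset.sum_lt_sum (fun i _ => mul_le_mul_of_nonneg_left (hlt i).le (sqNorm_nonneg _))
    ⟨j, Finset.mem_univ j, mul_lt_mul_of_pos_left (hlt j) (sqNorm_pos hj)⟩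

end Height

section ExpMap

variable {d k : ℕ} {α : Fin d → ℝ}

theorem ExpMap_fst (q : E d k) : (ExpMap d k α q).1 = q.1 := by
  unfold ExpMap
  split_ifs <;> rfl

theorem ExpMap_block {i : Fin d} (hα : α i ≠ 0) (q : E d k) :
    (ExpMap d k α q).2.1 i = arcChord (α i * q.2.2) (q.2.1 i) := by
  rcases eq_or_ne q.2.2 0 with hw | hw
  · simp [ExpMap, hw, arcChord_zero]
  · simp [ExpMap, hw, arcChord_apply, sinc_of_ne_zero (mul_ne_zero hα hw)]

theorem ExpMap_height (hα : ∀ i, α i ≠ 0) {q : E d k} (hq : ∀ i, |α i * q.2.2| < 2 * π) :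
    (ExpMap d k α q).2.2 = heightOver α (ExpMap d k α q).2.1 q.2.2 := by
  rcases eq_or_ne q.2.2 0 with hw | hw
  · simp [ExpMap, heightOver, hw, segmentRatio_zero]
  · simp only [heightOver, ExpMap_block (hα _),
      ← sqNorm_mul_div_eq_mul_segmentRatio (hα _) hw (hq _)]
    simp only [ExpMap, if_neg hw, sqNorm]

/-- The set `D` of covectors `(p, w)` with some `pⁱ ≠ 0` and every arc angle `αᵢ w` less than a full
turn; for `0 < α₁ ≤ … ≤ α_d` the latter says `|w| < 2π / α_d`. -/
def injectivityDomain (k : ℕ) (α : Fin d → ℝ) : Set (E d k) :=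
  {q | q.2.1 ≠ 0 ∧ ∀ i, |α i * q.2.2| < 2 * π}

theorem mk_mem_injectivityDomain (hd : 1 ≤ d) (hα : ∀ i, 0 < α i) (hmono : Monotone α)
    {p0 : Fin (k - 2 * d) → ℝ} {p : Fin d → ℝ × ℝ} {w : ℝ}
    (hw : |w| < 2 * π / α ⟨d - 1, Nat.sub_lt hd one_pos⟩) (hp : ∃ i, p i ≠ 0) :
    (p0, p, w) ∈ injectivityDomain k α := by
  refine ⟨Function.ne_iff.2 hp, fun i => ?_⟩
  have hle : α i ≤ α ⟨d - 1, Nat.sub_lt hd one_pos⟩ := hmono (Nat.le_sub_one_of_lt i.isLt)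
  calc |α i * w| = α i * |w| := by rw [abs_mul, abs_of_pos (hα i)]
    _ ≤ α ⟨d - 1, Nat.sub_lt hd one_pos⟩ * |w| := by gcongr
    _ < 2 * π := (lt_div_iff₀' (hα _)).1 hw

theorem ExpMap_block_ne_zero (hα : ∀ i, α i ≠ 0) {q : E d k} (hq : q ∈ injectivityDomain k α) :
    (ExpMap d k α q).2.1 ≠ 0 := by
  obtain ⟨j, hj⟩ := Function.ne_iff.1 hq.1
  refine Function.ne_iff.2 ⟨j, ?_⟩
  rw [ExpMap_block (hα j)]
  exact (map_ne_zero_iff _ (arcChord_injective (hq.2 j))).2 hj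

theorem ExpMap_injective_on_sphere_general (k : ℕ) (hα : ∀ i, α i ≠ 0) :
    InjOn (ExpMap d k α) (injectivityDomain k α) := by
  rintro ⟨p0, p, w⟩ hp ⟨q0, q, v⟩ hq hExp
  obtain rfl : p0 = q0 := by simpa only [ExpMap_fst] using congrArg Prod.fst hExp
  obtain rfl : w = v := by
    refine (strictMonoOn_heightOver hα (ExpMap_block_ne_zero hα hp)).injOn hp.2 hq.2 ?_
    rw [← ExpMap_height hα hp.2, hExp, ← ExpMap_height hα hq.2]
  obtain rfl : p = q := funext fun i => arcChord_injective (hp.2 i) <| by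
    simpa only [ExpMap_block (hα i)] using congrArg (fun e : E d k => e.2.1 i) hExp
  rfl

end ExpMap

/-- Injectivity of the exponential map on each sphere-slice of the cotangent
injectivity domain `D = {(p,w) : |w| < 2π/α_d, ∃ i, pⁱ ≠ 0}` (Lemma 3.8 of the
paper): if two covectors in `D` have the same Euclidean norm (equal lengths of
the corresponding geodesics) and the same image under `Exp`, they coincide. -/
theorem ExpMap_injective_on_sphere (d k : ℕ) (hd : 1 ≤ d) (hk : 2 * d ≤ k)
    (α : Fin d → ℝ) (hα : ∀ i, 0 < α i) (hmono : Monotone α)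
    (p0 q0 : Fin (k - 2 * d) → ℝ) (p q : Fin d → ℝ × ℝ) (w v : ℝ)
    (hwD : |w| < 2 * Real.pi / α ⟨d - 1, Nat.sub_lt hd one_pos⟩)
    (hpD : ∃ i, p i ≠ 0)
    (hvD : |v| < 2 * Real.pi / α ⟨d - 1, Nat.sub_lt hd one_pos⟩)
    (hqD : ∃ i, q i ≠ 0)
    (hnorm : ∑ i, p0 i ^ 2 + ∑ i, ((p i).1 ^ 2 + (p i).2 ^ 2) =
             ∑ i, q0 i ^ 2 + ∑ i, ((q i).1 ^ 2 + (q i).2 ^ 2))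
    (hExp : ExpMap d k α (p0, p, w) = ExpMap d k α (q0, q, v)) :
    p0 = q0 ∧ p = q ∧ w = v := by
  simpa only [Prod.mk.injEq] using ExpMap_injective_on_sphere_general k (fun i => (hα i).ne')
    (mk_mem_injectivityDomain hd hα hmono hwD hpD) (mk_mem_injectivityDomain hd hα hmono hvD hqD)
    hExp
end

section
/- Let K ∈ ℝ and N > 1, and suppose the measure contraction property MCP(K, N) holds at x, i.e. for every bounded measurable Ω ⊆ X with 0 < μ(Ω) < ∞ (and, if K > 0, with Ω contained in the metric ball B(x, π·√((N−1)/K))) and every t ∈ [0,1]: μ(Ω_t) ≥ ∫_Ω t·(s_K(t·dist(x,z)/√(N−1))/s_K(dist(x,z)/√(N−1)))^{N−1} dμ(z). Then for every real s > N and every bounded measurable Ω ⊆ X with 0 < μ(Ω) < ∞ (contained in B(x, π·√((N−1)/K)) if K > 0), the limsup as t → 0⁺ of μ(Ω_t)/t^s equals +∞. Consequently the geodesic dimension 𝒩(x) := inf{s > 0 : sup_Ω limsup_{t→0⁺} μ(Ω_t)/(t^s·μ(Ω)) = +∞} satisfies 𝒩(x) ≤ N. -/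
open MeasureTheory Metric Filter Set

/-- The comparison function `s_K` of constant curvature `K`. -/
noncomputable def sK (K r : ℝ) : ℝ :=
  if 0 < K then Real.sin (Real.sqrt K * r) / Real.sqrt K
  else if K = 0 then r
  else Real.sinh (Real.sqrt (-K) * r) / Real.sqrt (-K)

/-!
The ratio `s_K(tr) / s_K(r)` is at least a positive multiple of `t`, uniformly for `r` bounded, so
the distortion coefficient of `MCP(K, N)` is at least a positive multiple of `t ^ N` on a bounded
set `Ω`. Integrating over `Ω` bounds `μ(Ω_t)` below by a positive multiple of `t ^ N`, unless `Ω` is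
carried by the point `x`. In that case `x` is an atom fixed by the contraction and `μ(Ω_t)` does not
decay at all. Either way `μ(Ω_t) / t ^ s → ∞` as soon as `s > N`.
-/

section ComparisonFunction

open Real

variable {K N R d r t θ : ℝ}

lemma sinh_le_mul_cosh (hθ : 0 ≤ θ) : sinh θ ≤ θ * cosh θ := by
  have cosh_le : ∀ u ∈ interior (Icc 0 θ), deriv sinh u ≤ cosh θ := by
    intro u hu
    obtain ⟨hu0, huθ⟩ := interior_subset hu
    rw [Real.deriv_sinh, cosh_le_cosh]
    exact abs_le_abs_of_nonneg hu0 huθ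
  have := (convex_Icc 0 θ).image_sub_le_mul_sub_of_deriv_le continuous_sinh.continuousOn
    differentiable_sinh.differentiableOn cosh_le 0 (left_mem_Icc.2 hθ) θ (right_mem_Icc.2 hθ) hθ
  simpa [mul_comm] using this

lemma mul_sinh_le_cosh_mul_sinh_mul (hθ : 0 ≤ θ) (ht : 0 ≤ t) :
    t * sinh θ ≤ cosh θ * sinh (t * θ) :=
  calc t * sinh θ ≤ t * (θ * cosh θ) := by gcongr; exact sinh_le_mul_cosh hθ
    _ = cosh θ * (t * θ) := by ring
    _ ≤ cosh θ * sinh (t * θ) := by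
      gcongr
      exact self_le_sinh_iff.2 (by positivity)

lemma mul_sin_le_sin_mul_s8 (hθ : θ ∈ Icc 0 π) (ht : t ∈ Icc (0 : ℝ) 1) :
    t * sin θ ≤ sin (t * θ) := by
  simpa using strictConcaveOn_sin_Icc.concaveOn.2 hθ (left_mem_Icc.2 pi_nonneg) ht.1
    (sub_nonneg.2 ht.2) (add_sub_cancel t 1)

lemma sK_of_pos (hK : 0 < K) (r : ℝ) : sK K r = sin (√K * r) / √K := if_pos hK

lemma sK_zero (r : ℝ) : sK 0 r = r := by simp [sK]

lemma sK_of_neg (hK : K < 0) (r : ℝ) : sK K r = sinh (√(-K) * r) / √(-K) := by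
  simp [sK, hK.not_gt, hK.ne]

lemma sK_pos (hr : 0 < r) (hrK : 0 < K → √K * r < π) : 0 < sK K r := by
  rcases lt_trichotomy K 0 with hK | rfl | hK
  · have : 0 < √(-K) := sqrt_pos.2 (neg_pos.2 hK)
    rw [sK_of_neg hK]
    exact div_pos (sinh_pos_iff.2 (by positivity)) this
  · rwa [sK_zero]
  · have : 0 < √K := sqrt_pos.2 hK
    rw [sK_of_pos hK]
    exact div_pos (sin_pos_of_pos_of_lt_pi (by positivity) (hrK hK)) this

/- For `0 ≤ K` the factor is `cosh 0 = 1`, because `√(-K) = 0`. -/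
lemma mul_sK_le_cosh_mul_sK_mul (hr : 0 ≤ r) (hrK : 0 < K → √K * r ≤ π)
    (ht : t ∈ Icc (0 : ℝ) 1) : t * sK K r ≤ cosh (√(-K) * r) * sK K (t * r) := by
  rcases lt_trichotomy K 0 with hK | rfl | hK
  · rw [sK_of_neg hK, sK_of_neg hK, ← mul_div_assoc, ← mul_div_assoc, mul_left_comm _ t]
    exact div_le_div_of_nonneg_right (mul_sinh_le_cosh_mul_sinh_mul (by positivity) ht.1)
      (sqrt_nonneg _)
  · simp [sK_zero]
  · rw [sqrt_eq_zero_of_nonpos (neg_nonpos.2 hK.le), zero_mul, cosh_zero, one_mul, sK_of_pos hK,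
      sK_of_pos hK, ← mul_div_assoc, mul_left_comm _ t]
    gcongr
    exact mul_sin_le_sin_mul_s8 ⟨by positivity, hrK hK⟩ ht

lemma inv_cosh_mul_le_sK_mul_div_sK (hr : 0 < r) (hrR : r ≤ R) (hrK : 0 < K → √K * r < π)
    (ht : t ∈ Icc (0 : ℝ) 1) : (cosh (√(-K) * R))⁻¹ * t ≤ sK K (t * r) / sK K r := by
  have cosh_mono : cosh (√(-K) * r) ≤ cosh (√(-K) * R) := by
    rw [cosh_le_cosh]
    exact abs_le_abs_of_nonneg (by positivity) (by gcongr)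
  calc (cosh (√(-K) * R))⁻¹ * t ≤ (cosh (√(-K) * r))⁻¹ * t := by
        gcongr
        exact ht.1
    _ ≤ sK K (t * r) / sK K r := by
        rw [le_div_iff₀ (sK_pos hr hrK), mul_assoc, inv_mul_le_iff₀ (cosh_pos _)]
        exact mul_sK_le_cosh_mul_sK_mul hr.le (fun hK => (hrK hK).le) ht

/-- The distortion coefficient of `MCP(K, N)` at time `t` and distance `d` from the base point, that
is, the integrand in the measure contraction property. At `d = 0` it takes the junk value `0`
(for `N ≠ 1`) instead of the limit `t ^ N`. -/
noncomputable def distortionCoeff (K N t d : ℝ) : ℝ :=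
  t * (sK K (t * d / √(N - 1)) / sK K (d / √(N - 1))) ^ (N - 1)

lemma sqrt_mul_div_sqrt_lt_pi (hN : 1 < N) (hK : 0 < K) (hd : d < π * √((N - 1) / K)) :
    √K * (d / √(N - 1)) < π := by
  have hn : 0 < √(N - 1) := sqrt_pos.2 (sub_pos.2 hN)
  rw [sqrt_div (sub_pos.2 hN).le, ← mul_div_assoc, lt_div_iff₀ (sqrt_pos.2 hK)] at hd
  rwa [← mul_div_assoc, div_lt_iff₀ hn, mul_comm]

lemma mul_rpow_le_distortionCoeff (hN : 1 < N) (hd : 0 < d) (hdR : d ≤ R)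
    (hdK : 0 < K → d < π * √((N - 1) / K)) (ht : t ∈ Ioc (0 : ℝ) 1) :
    (cosh (√(-K) * (R / √(N - 1))))⁻¹ ^ (N - 1) * t ^ N ≤ distortionCoeff K N t d := by
  have : 0 < N - 1 := sub_pos.2 hN
  have ht0 := ht.1
  have hc := inv_pos.2 (cosh_pos (√(-K) * (R / √(N - 1))))
  set c := (cosh (√(-K) * (R / √(N - 1))))⁻¹
  have ratio_ge : c * t ≤ sK K (t * (d / √(N - 1))) / sK K (d / √(N - 1)) :=
    inv_cosh_mul_le_sK_mul_div_sK (by positivity) (by gcongr)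
      (fun hK => sqrt_mul_div_sqrt_lt_pi hN hK (hdK hK)) (Ioc_subset_Icc_self ht)
  calc c ^ (N - 1) * t ^ N = t * (c * t) ^ (N - 1) := by
        rw [mul_rpow hc.le ht0.le, rpow_sub_one ht0.ne' N]
        field_simp
    _ ≤ distortionCoeff K N t d := by
        rw [distortionCoeff, mul_div_assoc t d]
        gcongr

end ComparisonFunction

open scoped ENNReal Topology in
lemma tendsto_div_rpow_mul_nhds_top {f : ℝ → ℝ≥0∞} {a m : ℝ≥0∞} {p s : ℝ} (ha : a ≠ 0)
    (hm : m ≠ ⊤) (hps : p < s) (hf : ∀ᶠ t in 𝓝[>] 0, a * ENNReal.ofReal (t ^ p) ≤ f t) :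
    Tendsto (fun t => f t / (ENNReal.ofReal (t ^ s) * m)) (𝓝[>] 0) (𝓝 ⊤) := by
  have ham : a / m ≠ 0 := ENNReal.div_ne_zero.2 ⟨ha, hm⟩
  have lower_tendsto : Tendsto (fun t : ℝ => a / m * ENNReal.ofReal (t ^ (p - s)))
      (𝓝[>] 0) (𝓝 ⊤) := by
    simpa [ENNReal.mul_top ham] using ENNReal.Tendsto.const_mul (a := a / m)
      (ENNReal.tendsto_ofReal_nhds_top.2 (tendsto_rpow_neg_nhdsGT_zero (sub_neg.2 hps)))
      (Or.inl ENNReal.top_ne_zero)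
  refine tendsto_nhds_top_mono lower_tendsto ?_
  filter_upwards [hf, self_mem_nhdsWithin] with t hft ht
  have hts : 0 < t ^ s := Real.rpow_pos_of_pos ht s
  calc a / m * ENNReal.ofReal (t ^ (p - s))
      = a * ENNReal.ofReal (t ^ p) / (ENNReal.ofReal (t ^ s) * m) := by
        rw [Real.rpow_sub ht, ENNReal.ofReal_div_of_pos hts]
        simp only [div_eq_mul_inv]
        rw [ENNReal.mul_inv (Or.inl (ENNReal.ofReal_pos.2 hts).ne') (Or.inl ENNReal.ofReal_ne_top)]
        ring
    _ ≤ f t / (ENNReal.ofReal (t ^ s) * m) := by gcongr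

section Contraction

open scoped ENNReal Topology

variable {X : Type*}

/-- The contraction `Ω_t` of `Ω` at time `t` along the family of curves `Φ`, where the points of the
exceptional set `C` are discarded. -/
def contraction (C : Set X) (Φ : X → ℝ → X) (Ω : Set X) (t : ℝ) : Set X :=
  (fun y => Φ y t) '' (Ω \ C)

variable [MeasurableSpace X] {μ : Measure X} {x : X} {C Ω : Set X} {Φ : X → ℝ → X}

lemma measure_singleton_le_measure_contraction {t : ℝ} (hC : μ C = 0)
    (hfix : x ∉ C → Φ x t = x) (hx : x ∈ Ω) : μ {x} ≤ μ (contraction C Φ Ω t) := by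
  by_cases hxC : x ∈ C
  · simp [measure_mono_null (singleton_subset_iff.2 hxC) hC]
  · exact measure_mono (singleton_subset_iff.2 ⟨x, ⟨hx, hxC⟩, hfix hxC⟩)

variable [PseudoMetricSpace X]

/-- The geodesic dimension `𝒩(x)`: the infimum of the exponents `s > 0` for which some of the ratios
`μ(Ω_t) / (t ^ s μ(Ω))` are unbounded as `t → 0⁺`. The base point enters only through `Φ`. If there
is no such exponent, this real infimum takes the junk value `0`. -/
noncomputable def geodesicDimension (μ : Measure X) (C : Set X) (Φ : X → ℝ → X) : ℝ :=
  sInf {s : ℝ | 0 < s ∧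
    (⨆ (Ω : Set X) (_ : MeasurableSet Ω ∧ Bornology.IsBounded Ω ∧ 0 < μ Ω ∧ μ Ω < ⊤),
      limsup (fun t : ℝ => μ (contraction C Φ Ω t) / (ENNReal.ofReal (t ^ s) * μ Ω))
        (𝓝[>] 0)) = ⊤}

lemma geodesicDimension_le_of_forall_limsup_eq_top {D : ℝ} (hD : 0 ≤ D) (hΩ : MeasurableSet Ω)
    (hbdd : Bornology.IsBounded Ω) (hpos : 0 < μ Ω) (hfin : μ Ω < ⊤)
    (h : ∀ s, D < s → limsup (fun t : ℝ => μ (contraction C Φ Ω t) /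
      (ENNReal.ofReal (t ^ s) * μ Ω)) (𝓝[>] 0) = ⊤) :
    geodesicDimension μ C Φ ≤ D := by
  refine le_of_forall_gt_imp_ge_of_dense fun s hs => csInf_le ⟨0, fun _ hu => hu.1.le⟩ ?_
  exact ⟨hD.trans_lt hs,
    top_unique ((h s hs).ge.trans (le_iSup₂_of_le Ω ⟨hΩ, hbdd, hpos, hfin⟩ le_rfl))⟩

/-- The sets tested by `MCP(K, N)` at `x`: bounded, measurable, of positive finite measure, and
contained in the open comparison ball when `K > 0`. -/
structure IsMCPAdmissible (μ : Measure X) (x : X) (K N : ℝ) (Ω : Set X) : Prop where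
  measurableSet : MeasurableSet Ω
  isBounded : Bornology.IsBounded Ω
  measure_pos : 0 < μ Ω
  measure_lt_top : μ Ω < ⊤
  subset_ball : 0 < K → Ω ⊆ ball x (Real.pi * √((N - 1) / K))

/-- The measure contraction property `MCP(K, N)` at `x` along the family of curves `Φ`, with
exceptional set `C`. -/
def MCPAt (μ : Measure X) (x : X) (C : Set X) (Φ : X → ℝ → X) (K N : ℝ) : Prop :=
  ∀ Ω, IsMCPAdmissible μ x K N Ω → ∀ t ∈ Icc (0 : ℝ) 1,
    ∫⁻ z in Ω, ENNReal.ofReal (distortionCoeff K N t (dist x z)) ∂μ ≤ μ (contraction C Φ Ω t)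

variable {K N : ℝ}

lemma exists_isMCPAdmissible_ball [OpensMeasurableSpace X]
    (hball : ∀ r, 0 < r → 0 < μ (ball x r) ∧ μ (ball x r) < ⊤) (K : ℝ) (hN : 1 < N) :
    ∃ r, IsMCPAdmissible μ x K N (ball x r) := by
  obtain ⟨r, hr, hsub⟩ : ∃ r : ℝ, 0 < r ∧
      (0 < K → ball x r ⊆ ball x (Real.pi * √((N - 1) / K))) := by
    by_cases hK : 0 < K
    · have hradius : 0 < √((N - 1) / K) := Real.sqrt_pos.2 (div_pos (sub_pos.2 hN) hK)
      exact ⟨_, mul_pos Real.pi_pos hradius, fun _ => subset_rfl⟩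
    · exact ⟨1, one_pos, fun h => absurd h hK⟩
  exact ⟨r, measurableSet_ball, isBounded_ball, (hball r hr).1, (hball r hr).2, hsub⟩

end Contraction

namespace MCPAt

open scoped ENNReal Topology

variable {X : Type*} [MetricSpace X] [MeasurableSpace X] [MeasurableSingletonClass X]
  {μ : Measure X} {x : X} {C Ω : Set X} {Φ : X → ℝ → X} {K N : ℝ}

lemma exists_mul_measure_sdiff_singleton_le (h : MCPAt μ x C Φ K N) (hN : 1 < N)
    (hΩ : IsMCPAdmissible μ x K N Ω) :
    ∃ c : ℝ, 0 < c ∧ ∀ t ∈ Ioc (0 : ℝ) 1,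
      ENNReal.ofReal (c * t ^ N) * μ (Ω \ {x}) ≤ μ (contraction C Φ Ω t) := by
  obtain ⟨R, hR⟩ := hΩ.isBounded.subset_closedBall x
  refine ⟨_, Real.rpow_pos_of_pos (inv_pos.2 (Real.cosh_pos (√(-K) * (R / √(N - 1))))) (N - 1),
    fun t ht => ?_⟩
  set c := (Real.cosh (√(-K) * (R / √(N - 1))))⁻¹ ^ (N - 1)
  have coeff_ge : ∀ z ∈ Ω \ {x}, c * t ^ N ≤ distortionCoeff K N t (dist x z) := fun z hz =>
    mul_rpow_le_distortionCoeff hN (dist_pos.2 (Ne.symm hz.2)) (mem_closedBall'.1 (hR hz.1))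
      (fun hK => mem_ball'.1 (hΩ.subset_ball hK hz.1)) ht
  calc ENNReal.ofReal (c * t ^ N) * μ (Ω \ {x})
      = ∫⁻ _ in Ω \ {x}, ENNReal.ofReal (c * t ^ N) ∂μ := (setLIntegral_const _ _).symm
    _ ≤ ∫⁻ z in Ω \ {x}, ENNReal.ofReal (distortionCoeff K N t (dist x z)) ∂μ :=
        setLIntegral_mono' (hΩ.measurableSet.diff (measurableSet_singleton x))
          fun z hz => ENNReal.ofReal_le_ofReal (coeff_ge z hz)
    _ ≤ ∫⁻ z in Ω, ENNReal.ofReal (distortionCoeff K N t (dist x z)) ∂μ :=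
        lintegral_mono_set sdiff_subset
    _ ≤ μ (contraction C Φ Ω t) := h Ω hΩ t (Ioc_subset_Icc_self ht)

lemma exists_mul_rpow_le_measure_contraction (h : MCPAt μ x C Φ K N) (hN : 1 < N)
    (hC : μ C = 0) (hfix : ∀ t ∈ Ioc (0 : ℝ) 1, x ∉ C → Φ x t = x)
    (hΩ : IsMCPAdmissible μ x K N Ω) :
    ∃ a : ℝ≥0∞, a ≠ 0 ∧ ∀ t ∈ Ioc (0 : ℝ) 1,
      a * ENNReal.ofReal (t ^ N) ≤ μ (contraction C Φ Ω t) := by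
  by_cases hnull : μ (Ω \ {x}) = 0
  · have hxΩ : x ∈ Ω := by
      by_contra hx
      exact hΩ.measure_pos.ne' (by rwa [sdiff_singleton_eq_self hx] at hnull)
    have hatom : μ {x} ≠ 0 := fun h0 =>
      hΩ.measure_pos.ne' (by rwa [measure_sdiff_null h0] at hnull)
    refine ⟨μ {x}, hatom, fun t ht => ?_⟩
    calc μ {x} * ENNReal.ofReal (t ^ N) ≤ μ {x} :=
          mul_le_of_le_one_right' (ENNReal.ofReal_le_one.2
            (Real.rpow_le_one ht.1.le ht.2 (zero_lt_one.trans hN).le))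
      _ ≤ μ (contraction C Φ Ω t) :=
          measure_singleton_le_measure_contraction hC (hfix t ht) hxΩ
  · obtain ⟨c, hc, hle⟩ := h.exists_mul_measure_sdiff_singleton_le hN hΩ
    refine ⟨ENNReal.ofReal c * μ (Ω \ {x}), mul_ne_zero (ENNReal.ofReal_pos.2 hc).ne' hnull,
      fun t ht => ?_⟩
    rw [mul_right_comm, ← ENNReal.ofReal_mul hc.le]
    exact hle t ht

theorem tendsto_measure_contraction_div_nhds_top (h : MCPAt μ x C Φ K N) (hN : 1 < N)
    (hC : μ C = 0) (hfix : ∀ t ∈ Ioc (0 : ℝ) 1, x ∉ C → Φ x t = x)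
    (hΩ : IsMCPAdmissible μ x K N Ω) {s : ℝ} (hs : N < s) {m : ℝ≥0∞} (hm : m ≠ ⊤) :
    Tendsto (fun t => μ (contraction C Φ Ω t) / (ENNReal.ofReal (t ^ s) * m)) (𝓝[>] 0) (𝓝 ⊤) := by
  obtain ⟨a, ha, hle⟩ := h.exists_mul_rpow_le_measure_contraction hN hC hfix hΩ
  exact tendsto_div_rpow_mul_nhds_top ha hm hs (eventually_of_mem (Ioc_mem_nhdsGT one_pos) hle)

theorem limsup_measure_contraction_div_eq_top (h : MCPAt μ x C Φ K N) (hN : 1 < N)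
    (hC : μ C = 0) (hfix : ∀ t ∈ Ioc (0 : ℝ) 1, x ∉ C → Φ x t = x)
    (hΩ : IsMCPAdmissible μ x K N Ω) {s : ℝ} (hs : N < s) :
    limsup (fun t => μ (contraction C Φ Ω t) / ENNReal.ofReal (t ^ s)) (𝓝[>] 0) = ⊤ := by
  simpa only [mul_one] using
    (h.tendsto_measure_contraction_div_nhds_top hN hC hfix hΩ hs ENNReal.one_ne_top).limsup_eq

theorem geodesicDimension_le (h : MCPAt μ x C Φ K N) (hN : 1 < N) (hC : μ C = 0)
    (hfix : ∀ t ∈ Ioc (0 : ℝ) 1, x ∉ C → Φ x t = x) (hΩ : IsMCPAdmissible μ x K N Ω) :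
    geodesicDimension μ C Φ ≤ N :=
  geodesicDimension_le_of_forall_limsup_eq_top (zero_lt_one.trans hN).le hΩ.measurableSet
    hΩ.isBounded hΩ.measure_pos hΩ.measure_lt_top fun _ hs =>
      (h.tendsto_measure_contraction_div_nhds_top hN hC hfix hΩ hs hΩ.measure_lt_top.ne).limsup_eq

end MCPAt

/-- Theorem 1.8 of the paper: on a metric measure space with negligible cut
locus at `x`, the measure contraction property `MCP(K, N)` at `x` implies that
for every `s > N` and every bounded measurable set `Ω` of positive finite
measure (contained in the comparison ball if `K > 0`), the limsup of
`μ(Ω_t)/t^s` as `t → 0⁺` is `+∞`; consequently the geodesic dimension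
`𝒩(x)` is at most `N`. -/
theorem MCP_implies_geodesic_dimension_le {X : Type*} [MetricSpace X]
    [MeasurableSpace X] [BorelSpace X] (μ : Measure X)
    (hball : ∀ (y : X) (r : ℝ), 0 < r → 0 < μ (ball y r) ∧ μ (ball y r) < ⊤)
    (x : X) (C : Set X) (hC : μ C = 0) (Φ : X → ℝ → X)
    (hΦ : ∀ y ∉ C, Φ y 0 = x ∧ Φ y 1 = y ∧
      ∀ s ∈ Icc (0 : ℝ) 1, ∀ t ∈ Icc (0 : ℝ) 1,
        dist (Φ y s) (Φ y t) = |s - t| * dist x y)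
    (K N : ℝ) (hN : 1 < N)
    (hMCP : ∀ Ω : Set X, MeasurableSet Ω → Bornology.IsBounded Ω →
      0 < μ Ω → μ Ω < ⊤ →
      (0 < K → Ω ⊆ ball x (Real.pi * Real.sqrt ((N - 1) / K))) →
      ∀ t ∈ Icc (0 : ℝ) 1,
        μ ((fun y => Φ y t) '' (Ω \ C)) ≥
          ∫⁻ z in Ω, ENNReal.ofReal
            (t * (sK K (t * dist x z / Real.sqrt (N - 1)) /
                  sK K (dist x z / Real.sqrt (N - 1))) ^ (N - 1)) ∂μ) :
    (∀ s : ℝ, N < s → ∀ Ω : Set X, MeasurableSet Ω → Bornology.IsBounded Ω →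
      0 < μ Ω → μ Ω < ⊤ →
      (0 < K → Ω ⊆ ball x (Real.pi * Real.sqrt ((N - 1) / K))) →
      Filter.limsup
        (fun t : ℝ => μ ((fun y => Φ y t) '' (Ω \ C)) / ENNReal.ofReal (t ^ s))
        (nhdsWithin 0 (Ioi 0)) = ⊤) ∧
    sInf {s : ℝ | 0 < s ∧
      (⨆ (Ω : Set X) (_ : MeasurableSet Ω ∧ Bornology.IsBounded Ω ∧
          0 < μ Ω ∧ μ Ω < ⊤),
        Filter.limsup
          (fun t : ℝ => μ ((fun y => Φ y t) '' (Ω \ C)) /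
            (ENNReal.ofReal (t ^ s) * μ Ω))
          (nhdsWithin 0 (Ioi 0))) = ⊤} ≤ N := by
  have hfix : ∀ t ∈ Ioc (0 : ℝ) 1, x ∉ C → Φ x t = x := by
    intro t ht hx
    obtain ⟨hstart, -, hspeed⟩ := hΦ x hx
    have := hspeed t (Ioc_subset_Icc_self ht) 0 (left_mem_Icc.2 zero_le_one)
    rwa [dist_self, mul_zero, hstart, dist_eq_zero] at this
  have mcp : MCPAt μ x C Φ K N := fun Ω hΩ => hMCP Ω hΩ.measurableSet hΩ.isBounded
    hΩ.measure_pos hΩ.measure_lt_top hΩ.subset_ball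
  obtain ⟨r, hr⟩ := exists_isMCPAdmissible_ball (hball x) K hN
  exact ⟨fun s hs Ω hmeas hbdd hpos hfin hsub =>
      mcp.limsup_measure_contraction_div_eq_top hN hC hfix ⟨hmeas, hbdd, hpos, hfin, hsub⟩ hs,
    mcp.geodesicDimension_le hN hC hfix hr⟩
end

section
/- Let B ⊆ X be a Borel set and let κ be a real number with 0 < κ < dim_H(B), the Hausdorff dimension of B. Then there exists x ∈ B such that for every s with 0 < s < κ and every bounded measurable Ω ⊆ X with 0 < μ(Ω) < ∞, the quotient μ(Ω_t^x)/t^s tends to 0 as t → 0⁺, where Ω_t^x := {Φ^x(y,t) : y ∈ Ω \ C(x)}. In particular, the geodesic dimension 𝒩(x) := sup{s > 0 : every such limsup is 0} satisfies 𝒩(x) ≥ κ, and hence sup{𝒩(x) : x ∈ B} ≥ dim_H(B). -/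
open MeasureTheory Metric Filter Set

/-!
Let `E` be the set of points `x` with `μ (closedBall x r) ≥ r ^ κ` for arbitrarily small `r > 0`.
Given an open set `U` of finite measure, the Vitali covering lemma selects among such balls
contained in `U` a disjoint family whose fivefold dilations cover `E ∩ U`; the dilated diameters
`d` satisfy `∑ d ^ κ ≤ 10 ^ κ * μ U`. Letting the radii tend to zero, the `κ`-dimensional Hausdorff
measure of `E ∩ U` is finite, and exhausting the space by such `U` gives `dimH E ≤ κ`. So if
`κ < dimH B`, some `x ∈ B` satisfies `μ (closedBall x r) < r ^ κ` for all small `r`. At such a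
point, a bounded set contracted towards `x` by a factor `t` lies in a ball of radius `R * t`, so its
measure is `O(t ^ κ) = o(t ^ s)` whenever `s < κ`.
-/

open scoped NNReal ENNReal Topology

section Covering

theorem countable_of_pairwiseDisjoint_of_measure_pos {α ι : Type*} [MeasurableSpace α]
    {μ : Measure α} {U : Set α} {u : Set ι} {A : ι → Set α} (hU : μ U ≠ ⊤)
    (hA : ∀ i ∈ u, MeasurableSet (A i)) (hdisj : u.PairwiseDisjoint A)
    (hAU : ∀ i ∈ u, A i ⊆ U) (hpos : ∀ i ∈ u, 0 < μ (A i)) : u.Countable := by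
  have hfinite : μ (⋃ i : u, A i) ≠ ⊤ :=
    measure_ne_top_of_subset (iUnion_subset fun i => hAU i i.2) hU
  have hcountable := Measure.countable_meas_pos_of_disjoint_of_meas_iUnion_ne_top μ
    (fun i : u => hA i i.2) hdisj.subtype hfinite
  have hall : {i : u | 0 < μ (A i)} = univ := eq_univ_of_forall fun i => hpos i i.2
  rwa [hall, countable_univ_iff, countable_coe_iff] at hcountable

variable {X : Type*} [PseudoMetricSpace X]

theorem ediam_closedBall_le_ofReal (x : X) (r : ℝ) :
    ediam (closedBall x r) ≤ ENNReal.ofReal (2 * r) := by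
  refine ediam_le_of_forall_dist_le fun y hy z hz => ?_
  linarith [dist_triangle_right y z x, mem_closedBall.1 hy, mem_closedBall.1 hz]

variable [MeasurableSpace X] {μ : Measure X}

theorem nonempty_finiteSpanningSetsIn_isOpen_of_measure_ball_lt_top
    (hball : ∀ x r, 0 < r → μ (ball x r) < ⊤) :
    Nonempty (μ.FiniteSpanningSetsIn {U | IsOpen U}) := by
  rcases isEmpty_or_nonempty X with _ | ⟨⟨x⟩⟩
  · exact ⟨⟨fun _ => ∅, fun _ => isOpen_empty, by simp, Subsingleton.elim _ _⟩⟩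
  · exact ⟨⟨fun n => ball x (n + 1), fun _ => isOpen_ball, fun n => hball x _ n.cast_add_one_pos,
      iUnion_ball_nat_succ x⟩⟩

variable [OpensMeasurableSpace X] {U : Set X} {r : X → ℝ}

theorem exists_countable_pairwiseDisjoint_closedBall_cover {D : Set X} {δ : ℝ} (hU : μ U ≠ ⊤)
    (hrδ : ∀ x ∈ D, r x ≤ δ) (hrU : ∀ x ∈ D, closedBall x (r x) ⊆ U)
    (hpos : ∀ x ∈ D, 0 < μ (closedBall x (r x))) :
    ∃ u ⊆ D, u.Countable ∧ (u.PairwiseDisjoint fun x => closedBall x (r x)) ∧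
      D ⊆ ⋃ x : u, closedBall (x : X) (5 * r x) := by
  obtain ⟨u, huD, hdisj, hcover⟩ :=
    Vitali.exists_disjoint_subfamily_covering_enlargement_closedBall D id r δ hrδ 5 (by norm_num)
  have hcountable : u.Countable :=
    countable_of_pairwiseDisjoint_of_measure_pos hU (fun _ _ => measurableSet_closedBall) hdisj
      (fun x hx => hrU x (huD hx)) fun x hx => hpos x (huD hx)
  refine ⟨u, huD, hcountable, hdisj, fun x hx => ?_⟩
  obtain ⟨y, hyu, hxy⟩ := hcover x hx
  have hr : 0 ≤ r x := nonempty_closedBall.1 (nonempty_of_measure_ne_zero (hpos x hx).ne')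
  exact mem_iUnion.2 ⟨⟨y, hyu⟩, hxy (mem_closedBall_self hr)⟩

theorem tsum_ediam_closedBall_rpow_le {u : Set X} {κ : ℝ} (hκ : 0 ≤ κ)
    (hdisj : u.PairwiseDisjoint fun x => closedBall x (r x))
    (hrU : ∀ x ∈ u, closedBall x (r x) ⊆ U)
    (hmass : ∀ x ∈ u, ENNReal.ofReal (r x) ^ κ ≤ μ (closedBall x (r x))) :
    ∑' x : u, ediam (closedBall (x : X) (5 * r x)) ^ κ ≤ 10 ^ κ * μ U := by
  have hterm (x : u) :
      ediam (closedBall (x : X) (5 * r x)) ^ κ ≤ 10 ^ κ * μ (closedBall (x : X) (r x)) :=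
    calc ediam (closedBall (x : X) (5 * r x)) ^ κ
        ≤ ENNReal.ofReal (2 * (5 * r x)) ^ κ := by
          gcongr
          exact ediam_closedBall_le_ofReal _ _
      _ = 10 ^ κ * ENNReal.ofReal (r x) ^ κ := by
          rw [← mul_assoc, ENNReal.ofReal_mul (by norm_num), ENNReal.mul_rpow_of_nonneg _ _ hκ]
          norm_num
      _ ≤ 10 ^ κ * μ (closedBall (x : X) (r x)) := by
          gcongr
          exact hmass x x.2
  calc ∑' x : u, ediam (closedBall (x : X) (5 * r x)) ^ κ
      ≤ ∑' x : u, 10 ^ κ * μ (closedBall (x : X) (r x)) := ENNReal.tsum_le_tsum hterm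
    _ = 10 ^ κ * ∑' x : u, μ (closedBall (x : X) (r x)) := ENNReal.tsum_mul_left
    _ ≤ 10 ^ κ * μ (⋃ x : u, closedBall (x : X) (r x)) := by
        gcongr
        exact tsum_meas_le_meas_iUnion_of_disjoint μ (fun _ => measurableSet_closedBall)
          hdisj.subtype
    _ ≤ 10 ^ κ * μ U := by
        gcongr
        exact iUnion_subset fun x => hrU x x.2

theorem exists_countable_closedBall_cover_tsum_ediam_rpow_le {D : Set X} {κ : ℝ} (hκ : 0 ≤ κ)
    (hU : IsOpen U) (hμU : μ U ≠ ⊤) (hDU : D ⊆ U)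
    (hD : ∀ x ∈ D, ∃ᶠ r in 𝓝[>] 0, ENNReal.ofReal r ^ κ ≤ μ (closedBall x r))
    {δ : ℝ} (hδ : 0 < δ) :
    ∃ (u : Set X) (r : X → ℝ), u.Countable ∧ (∀ x ∈ u, r x ≤ δ) ∧
      D ⊆ ⋃ x : u, closedBall (x : X) (5 * r x) ∧
      ∑' x : u, ediam (closedBall (x : X) (5 * r x)) ^ κ ≤ 10 ^ κ * μ U := by
  have hradius (x : X) (hx : x ∈ D) : ∃ r, 0 < r ∧ r ≤ δ ∧ closedBall x r ⊆ U ∧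
      ENNReal.ofReal r ^ κ ≤ μ (closedBall x r) := by
    have hball : ∀ᶠ r in 𝓝[>] 0, closedBall x r ⊆ U :=
      nhdsWithin_le_nhds (eventually_closedBall_subset (hU.mem_nhds (hDU hx)))
    obtain ⟨r, hmass, hrU, hr0, hrδ⟩ :=
      ((hD x hx).and_eventually (hball.and (Ioc_mem_nhdsGT hδ))).exists
    exact ⟨r, hr0, hrδ, hrU, hmass⟩
  choose! r hr0 hrδ hrU hmass using hradius
  have hpos (x : X) (hx : x ∈ D) : 0 < μ (closedBall x (r x)) :=
    (ENNReal.rpow_pos (ENNReal.ofReal_pos.2 (hr0 x hx)) ENNReal.ofReal_ne_top).trans_le (hmass x hx)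
  obtain ⟨u, huD, hcountable, hdisj, hcover⟩ :=
    exists_countable_pairwiseDisjoint_closedBall_cover hμU hrδ hrU hpos
  exact ⟨u, r, hcountable, fun x hx => hrδ x (huD hx), hcover,
    tsum_ediam_closedBall_rpow_le hκ hdisj (fun x hx => hrU x (huD hx))
      fun x hx => hmass x (huD hx)⟩

end Covering

section Dimension

variable {X : Type*} [MetricSpace X] [MeasurableSpace X] [BorelSpace X] {μ : Measure X}

theorem hausdorffMeasure_le_of_frequently_rpow_le_measure_closedBall {D U : Set X} {κ : ℝ}
    (hκ : 0 ≤ κ) (hU : IsOpen U) (hDU : D ⊆ U)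
    (hD : ∀ x ∈ D, ∃ᶠ r in 𝓝[>] 0, ENNReal.ofReal r ^ κ ≤ μ (closedBall x r)) :
    μH[κ] D ≤ 10 ^ κ * μ U := by
  rcases eq_or_ne (μ U) ⊤ with hμU | hμU
  · have h10 : (10 : ℝ≥0∞) ^ κ ≠ 0 := (ENNReal.rpow_pos (by norm_num) (by norm_num)).ne'
    simp [hμU, ENNReal.mul_top h10]
  choose u r hcountable hrδ hcover hsum using fun n : ℕ =>
    exists_countable_closedBall_cover_tsum_ediam_rpow_le hκ hU hμU hDU hD
      (Nat.one_div_pos_of_nat (α := ℝ) (n := n))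
  have (n : ℕ) : Countable (u n) := (hcountable n).to_subtype
  have hdiam (n : ℕ) (x : u n) :
      ediam (closedBall (x : X) (5 * r n x)) ≤ ENNReal.ofReal (10 * (1 / (n + 1))) :=
    (ediam_closedBall_le_ofReal _ _).trans
      (ENNReal.ofReal_le_ofReal (by linarith [hrδ n x x.2]))
  have hlim : Tendsto (fun n : ℕ => ENNReal.ofReal (10 * (1 / (n + 1)))) atTop (𝓝 0) := by
    simpa using ENNReal.tendsto_ofReal (tendsto_one_div_add_atTop_nhds_zero_nat.const_mul (10 : ℝ))
  calc μH[κ] D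
      ≤ liminf (fun n => ∑' x : u n, ediam (closedBall (x : X) (5 * r n x)) ^ κ) atTop :=
        Measure.hausdorffMeasure_le_liminf_tsum κ D _ hlim _ (.of_forall hdiam)
          (.of_forall hcover)
    _ ≤ liminf (fun _ : ℕ => 10 ^ κ * μ U) atTop := liminf_le_liminf (.of_forall hsum)
    _ = 10 ^ κ * μ U := liminf_const _

theorem dimH_setOf_frequently_rpow_le_measure_closedBall_le
    (S : μ.FiniteSpanningSetsIn {U | IsOpen U}) (κ : ℝ≥0) :
    dimH {x | ∃ᶠ r in 𝓝[>] 0, ENNReal.ofReal r ^ (κ : ℝ) ≤ μ (closedBall x r)} ≤ κ := by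
  set E := {x | ∃ᶠ r in 𝓝[>] 0, ENNReal.ofReal r ^ (κ : ℝ) ≤ μ (closedBall x r)}
  have hfinite (n : ℕ) : μH[κ] (E ∩ S.set n) ≠ ⊤ := by
    refine ne_top_of_le_ne_top ?_ (hausdorffMeasure_le_of_frequently_rpow_le_measure_closedBall
      κ.coe_nonneg (S.set_mem n) inter_subset_right fun x hx => hx.1)
    exact ENNReal.mul_ne_top (by simp) (S.finite n).ne
  calc dimH E = dimH (⋃ n, E ∩ S.set n) := by rw [← inter_iUnion, S.spanning, inter_univ]
    _ = ⨆ n, dimH (E ∩ S.set n) := dimH_iUnion _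
    _ ≤ κ := iSup_le fun n => dimH_le_of_hausdorffMeasure_ne_top (hfinite n)

theorem exists_mem_eventually_measure_closedBall_lt_rpow
    (S : μ.FiniteSpanningSetsIn {U | IsOpen U}) {B : Set X} {κ : ℝ≥0} (hκB : κ < dimH B) :
    ∃ x ∈ B, ∀ᶠ r in 𝓝[>] 0, μ (closedBall x r) < ENNReal.ofReal r ^ (κ : ℝ) := by
  by_contra! hB
  exact hκB.not_ge ((dimH_mono hB).trans (dimH_setOf_frequently_rpow_le_measure_closedBall_le S κ))

end Dimension

section Contraction

variable {X : Type*} [PseudoMetricSpace X] {x : X}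

theorem dist_eq_mul_dist_of_constant_speed {y : X} {γ : ℝ → X} (hγ0 : γ 0 = x)
    (hγ : ∀ s ∈ Icc (0 : ℝ) 1, ∀ t ∈ Icc (0 : ℝ) 1, dist (γ s) (γ t) = |s - t| * dist x y)
    {t : ℝ} (ht : t ∈ Icc (0 : ℝ) 1) : dist (γ t) x = t * dist y x := by
  simpa only [hγ0, sub_zero, abs_of_nonneg ht.1, dist_comm x y] using
    hγ t ht 0 (left_mem_Icc.2 zero_le_one)

theorem image_subset_closedBall_of_dist_le_mul {Ω : Set X} {f : X → X} {R t : ℝ}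
    (ht : 0 ≤ t) (hΩ : Ω ⊆ closedBall x R) (hf : ∀ y ∈ Ω, dist (f y) x ≤ t * dist y x) :
    f '' Ω ⊆ closedBall x (R * t) := by
  rintro _ ⟨y, hy, rfl⟩
  calc dist (f y) x ≤ t * dist y x := hf y hy
    _ ≤ t * R := by gcongr; exact hΩ hy
    _ = R * t := mul_comm t R

variable [MeasurableSpace X] {μ : Measure X}

theorem tendsto_measure_div_rpow_of_subset_closedBall {κ s R : ℝ} (hsκ : s < κ)
    (hR : 0 < R) (hμ : ∀ᶠ r in 𝓝[>] 0, μ (closedBall x r) ≤ ENNReal.ofReal r ^ κ)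
    {A : ℝ → Set X} (hA : ∀ᶠ t in 𝓝[>] 0, A t ⊆ closedBall x (R * t)) :
    Tendsto (fun t => μ (A t) / ENNReal.ofReal (t ^ s)) (𝓝[>] 0) (𝓝 0) := by
  have hbound : Tendsto (fun t => ENNReal.ofReal (R ^ κ * t ^ (κ - s))) (𝓝[>] 0) (𝓝 0) := by
    have hrpow : Tendsto (fun t : ℝ => t ^ (κ - s)) (𝓝[>] 0) (𝓝 0) := by
      have hcont := Real.continuousAt_rpow_const 0 (κ - s) (.inr (sub_pos.2 hsκ).le)
      simpa only [Real.zero_rpow (sub_pos.2 hsκ).ne'] using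
        hcont.tendsto.mono_left nhdsWithin_le_nhds
    simpa using ENNReal.tendsto_ofReal (hrpow.const_mul (R ^ κ))
  refine tendsto_of_tendsto_of_tendsto_of_le_of_le' tendsto_const_nhds hbound
    (.of_forall fun _ => zero_le) ?_
  filter_upwards [hA, eventually_nhdsGT_zero_mul_left hR hμ, eventually_mem_nhdsWithin]
    with t hAt hμt (ht : 0 < t)
  refine ENNReal.div_le_of_le_mul ?_
  calc μ (A t) ≤ μ (closedBall x (R * t)) := measure_mono hAt
    _ ≤ ENNReal.ofReal (R * t) ^ κ := hμt
    _ = ENNReal.ofReal (R ^ κ * t ^ (κ - s)) * ENNReal.ofReal (t ^ s) := by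
        rw [ENNReal.ofReal_rpow_of_pos (by positivity), ← ENNReal.ofReal_mul (by positivity),
          Real.mul_rpow hR.le ht.le, mul_assoc, ← Real.rpow_add ht, sub_add_cancel]

end Contraction

theorem exists_point_geodesic_dimension_ge_general {X : Type*} [MetricSpace X]
    [MeasurableSpace X] [BorelSpace X] {μ : Measure X}
    (S : μ.FiniteSpanningSetsIn {U | IsOpen U}) (C : X → Set X) (Φ : X → X → ℝ → X)
    (hΦ : ∀ x, ∀ y ∉ C x, ∀ t ∈ Icc (0 : ℝ) 1, dist (Φ x y t) x ≤ t * dist y x)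
    {B : Set X} {κ : ℝ≥0} (hκB : κ < dimH B) :
    ∃ x ∈ B, ∀ s : ℝ, s < κ → ∀ Ω : Set X, Bornology.IsBounded Ω →
      Tendsto (fun t : ℝ => μ ((fun y => Φ x y t) '' (Ω \ C x)) / ENNReal.ofReal (t ^ s))
        (𝓝[>] 0) (𝓝 0) := by
  obtain ⟨x, hxB, hx⟩ := exists_mem_eventually_measure_closedBall_lt_rpow S hκB
  refine ⟨x, hxB, fun s hsκ Ω hΩ => ?_⟩
  obtain ⟨R, hR, hΩR⟩ := hΩ.subset_closedBall_lt 0 x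
  refine tendsto_measure_div_rpow_of_subset_closedBall hsκ hR (hx.mono fun _ => le_of_lt) ?_
  filter_upwards [Ioc_mem_nhdsGT one_pos] with t ht
  exact image_subset_closedBall_of_dist_le_mul ht.1.le (sdiff_subset.trans hΩR)
    fun y hy => hΦ x y hy.2 t ⟨ht.1.le, ht.2⟩

/-- Theorem 1.5 of the paper (main step): if `B` is a Borel subset of a metric
measure space with negligible cut loci and `0 < κ < dim_H B`, then there is a
point `x ∈ B` at which, for every `0 < s < κ` and every bounded measurable `Ω`
of positive finite measure, `μ(Ω_t^x)/t^s → 0` as `t → 0⁺`; in particular the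
geodesic dimension at `x` is at least `κ`, whence
`sup {𝒩(x) : x ∈ B} ≥ dim_H B`. -/
theorem exists_point_geodesic_dimension_ge {X : Type*} [MetricSpace X]
    [MeasurableSpace X] [BorelSpace X] (μ : Measure X)
    (hball : ∀ (y : X) (r : ℝ), 0 < r → 0 < μ (ball y r) ∧ μ (ball y r) < ⊤)
    (C : X → Set X) (hC : ∀ x, μ (C x) = 0) (Φ : X → X → ℝ → X)
    (hΦ : ∀ x, ∀ y ∉ C x, Φ x y 0 = x ∧ Φ x y 1 = y ∧
      ∀ s ∈ Icc (0 : ℝ) 1, ∀ t ∈ Icc (0 : ℝ) 1,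
        dist (Φ x y s) (Φ x y t) = |s - t| * dist x y)
    (B : Set X) (hB : MeasurableSet B)
    (κ : ℝ) (hκ : 0 < κ) (hκB : ENNReal.ofReal κ < dimH B) :
    ∃ x ∈ B, ∀ s : ℝ, 0 < s → s < κ →
      ∀ Ω : Set X, MeasurableSet Ω → Bornology.IsBounded Ω →
        0 < μ Ω → μ Ω < ⊤ →
        Filter.Tendsto
          (fun t : ℝ => μ ((fun y => Φ x y t) '' (Ω \ C x)) /
            ENNReal.ofReal (t ^ s))
          (nhdsWithin 0 (Ioi 0)) (nhds 0) := by
  obtain ⟨S⟩ := nonempty_finiteSpanningSetsIn_isOpen_of_measure_ball_lt_top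
    fun y r hr => (hball y r hr).2
  obtain ⟨x, hxB, hx⟩ := exists_point_geodesic_dimension_ge_general S C Φ
    (fun x y hy t ht =>
      (dist_eq_mul_dist_of_constant_speed (hΦ x y hy).1 (hΦ x y hy).2.2 ht).le) hκB
  exact ⟨x, hxB, fun s _ hsκ Ω _ hΩ _ _ => hx s (by rwa [Real.coe_toNNReal κ hκ.le]) Ω hΩ⟩
end

section
/- Define Ĵ : ℝ^k × ℝ → ℝ by Ĵ(p, w) := (2^{2d}/(α²·w^{2d+2})) · Σ_{i=1}^d ‖pⁱ‖² · (∏_{j≠i} sin²(α_j·w/2)) · sin(α_i·w/2) · (sin(α_i·w/2) − (α_i·w/2)·cos(α_i·w/2)) for w ≠ 0 (with α := ∏ α_i), and Ĵ(p, 0) := (1/12)·Σ_{i=1}^d α_i²·‖pⁱ‖². Then for every Lebesgue-measurable set A ⊆ D and every t ∈ [0,1]: ∫_{t·A} Ĵ dλ ≥ t^{k+3} · ∫_A Ĵ dλ, where t·A := {(t·p, t·w) : (p,w) ∈ A} and λ is the Lebesgue measure on ℝ^k × ℝ ≅ ℝ^{k+1}. (This is the inequality μ(Ω_t) ≥ t^{k+3}·μ(Ω)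 proving that a corank-1 Carnot group of rank k satisfies MCP(0, k+3).) -/
open Finset MeasureTheory Pointwise

/-- The Jacobian determinant `Ĵ` of the exponential map of a corank-1 Carnot
group whose skew-symmetric matrix has nonzero singular values `α 0 ≤ … ≤ α (d-1)`. -/
noncomputable def Jhat (d k : ℕ) (α : Fin d → ℝ) (q : E d k) : ℝ :=
  if q.2.2 = 0 then
    (1 / 12) * ∑ i, α i ^ 2 * ((q.2.1 i).1 ^ 2 + (q.2.1 i).2 ^ 2)
  else
    2 ^ (2 * d) / ((∏ i, α i) ^ 2 * q.2.2 ^ (2 * d + 2)) *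
      ∑ i, ((q.2.1 i).1 ^ 2 + (q.2.1 i).2 ^ 2) *
        (∏ j ∈ univ.erase i, Real.sin (α j * q.2.2 / 2) ^ 2) *
        Real.sin (α i * q.2.2 / 2) *
        (Real.sin (α i * q.2.2 / 2) - α i * q.2.2 / 2 * Real.cos (α i * q.2.2 / 2))

/-!
Put `x_j = α_j w / 2`, `sinc x = sin x / x` and `m x = (sin x - x cos x) / x ^ 3`, the last two
being continued to `x = 0`. Absorbing the powers of `w` into the trigonometric factors gives
`Ĵ(p, w) = ∑ i, (α_i / 2)² ‖pⁱ‖² (∏_{j ≠ i} sinc² x_j) sinc x_i m x_i`, also at `w = 0`.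
Since `sinc x = ∫₀¹ cos (s x) ds` and `m x = ∫₀¹ s² sinc (s x) ds`, both functions inherit from
the cosine that they decrease in `|x|` as long as `|x| ≤ π`, and both are nonnegative there. Hence
`Ĵ(t p, t w) ≥ t² Ĵ(p, w)`, and the change of variables `q ↦ t q` contributes `t ^ (k + 1)`.
-/

section Sinc

open Real

lemma mul_sinc (x : ℝ) : x * sinc x = sin x := by
  rcases eq_or_ne x 0 with rfl | hx
  · simp
  · rw [sinc_of_ne_zero hx, mul_div_cancel₀ _ hx]

lemma sinc_nonneg_of_abs_le_pi {x : ℝ} (hx : |x| ≤ π) : 0 ≤ sinc x := by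
  wlog hx_nonneg : 0 ≤ x generalizing x
  · rw [← sinc_neg]
    exact this (by rwa [abs_neg]) (by linarith)
  rw [sinc_apply]
  split_ifs
  · exact zero_le_one
  · exact div_nonneg (sin_nonneg_of_nonneg_of_le_pi hx_nonneg (abs_le.1 hx).2) hx_nonneg

lemma sinc_eq_integral_cos (x : ℝ) : sinc x = ∫ s in (0 : ℝ)..1, cos (s * x) := by
  rcases eq_or_ne x 0 with rfl | hx
  · simp
  · rw [intervalIntegral.integral_comp_mul_right cos hx, integral_cos, sinc_of_ne_zero hx]
    simp [div_eq_inv_mul]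

lemma abs_mul_le_abs_mul_left (s : ℝ) {x y : ℝ} (hxy : |x| ≤ |y|) : |s * x| ≤ |s * y| := by
  rw [abs_mul, abs_mul]
  gcongr

lemma abs_mul_le_of_mem_Icc {s x : ℝ} (hs : s ∈ Set.Icc (0 : ℝ) 1) : |s * x| ≤ |x| := by
  rw [abs_mul, abs_of_nonneg hs.1]
  exact mul_le_of_le_one_left (abs_nonneg x) hs.2

lemma cos_le_cos_of_abs_le_abs {x y : ℝ} (hxy : |x| ≤ |y|) (hy : |y| ≤ π) : cos y ≤ cos x := by
  rw [← cos_abs x, ← cos_abs y]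
  exact cos_le_cos_of_nonneg_of_le_pi (abs_nonneg x) hy hxy

lemma sinc_le_sinc_of_abs_le_abs {x y : ℝ} (hxy : |x| ≤ |y|) (hy : |y| ≤ π) :
    sinc y ≤ sinc x := by
  rw [sinc_eq_integral_cos, sinc_eq_integral_cos]
  refine intervalIntegral.integral_mono_on zero_le_one
    (Continuous.intervalIntegrable (by fun_prop) _ _)
    (Continuous.intervalIntegrable (by fun_prop) _ _) fun s hs ↦ ?_
  exact cos_le_cos_of_abs_le_abs (abs_mul_le_abs_mul_left s hxy)
    ((abs_mul_le_of_mem_Icc hs).trans hy)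

/-- The function `(sin x - x cos x) / x ^ 3`, continued to `x = 0` by the value `1 / 3`. It is
encoded as the second moment of `s ↦ sinc (s * x)` on `[0, 1]`, so that bounds on `sinc` pass to
it; `pow_three_mul_sincSecondMoment` recovers the closed form. -/
noncomputable def sincSecondMoment (x : ℝ) : ℝ := ∫ s in (0 : ℝ)..1, s ^ 2 * sinc (s * x)

lemma sincSecondMoment_zero : sincSecondMoment 0 = 1 / 3 := by
  norm_num [sincSecondMoment]

lemma continuous_sincSecondMoment : Continuous sincSecondMoment :=
  intervalIntegral.continuous_parametric_intervalIntegral_of_continuous' (by fun_prop) 0 1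

lemma integral_mul_sin (x : ℝ) : ∫ y in (0 : ℝ)..x, y * sin y = sin x - x * cos x := by
  have hderiv (y : ℝ) : HasDerivAt (fun y ↦ sin y - y * cos y) (y * sin y) y :=
    ((hasDerivAt_sin y).fun_sub ((hasDerivAt_id' y).fun_mul (hasDerivAt_cos y))).congr_deriv
      (by ring)
  rw [intervalIntegral.integral_eq_sub_of_hasDerivAt (fun y _ ↦ hderiv y)
    (Continuous.intervalIntegrable (by fun_prop) _ _)]
  simp

lemma pow_three_mul_sincSecondMoment (x : ℝ) :
    x ^ 3 * sincSecondMoment x = sin x - x * cos x := by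
  calc x ^ 3 * sincSecondMoment x
      = x * ∫ s in (0 : ℝ)..1, x ^ 2 * (s ^ 2 * sinc (s * x)) := by
        rw [intervalIntegral.integral_const_mul, sincSecondMoment]
        ring
    _ = x * ∫ s in (0 : ℝ)..1, s * x * sin (s * x) := by
        congr! 3 with s
        rw [← mul_sinc (s * x)]
        ring
    _ = ∫ y in (0 : ℝ)..x, y * sin y := by
        rw [intervalIntegral.mul_integral_comp_mul_right (f := fun y ↦ y * sin y), zero_mul,
          one_mul]
    _ = sin x - x * cos x := integral_mul_sin x

lemma sincSecondMoment_nonneg_of_abs_le_pi {x : ℝ} (hx : |x| ≤ π) : 0 ≤ sincSecondMoment x :=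
  intervalIntegral.integral_nonneg zero_le_one fun _ hs ↦
    mul_nonneg (sq_nonneg _) (sinc_nonneg_of_abs_le_pi ((abs_mul_le_of_mem_Icc hs).trans hx))

lemma sincSecondMoment_le_of_abs_le_abs {x y : ℝ} (hxy : |x| ≤ |y|) (hy : |y| ≤ π) :
    sincSecondMoment y ≤ sincSecondMoment x := by
  refine intervalIntegral.integral_mono_on zero_le_one
    (Continuous.intervalIntegrable (by fun_prop) _ _)
    (Continuous.intervalIntegrable (by fun_prop) _ _) fun s hs ↦ ?_
  have hsinc : sinc (s * y) ≤ sinc (s * x) :=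
    sinc_le_sinc_of_abs_le_abs (abs_mul_le_abs_mul_left s hxy)
      ((abs_mul_le_of_mem_Icc hs).trans hy)
  gcongr

end Sinc

section Haar

open Module
open scoped ENNReal

variable {V : Type*} [NormedAddCommGroup V] [NormedSpace ℝ V] [FiniteDimensional ℝ V]
  [MeasurableSpace V] [BorelSpace V] (μ : Measure V) [μ.IsAddHaarMeasure]

lemma setLIntegral_smul_set (f : V → ℝ≥0∞) {r : ℝ} (hr : r ≠ 0) (s : Set V) :
    ∫⁻ x in r • s, f x ∂μ =
      ENNReal.ofReal |r ^ finrank ℝ V| * ∫⁻ x in s, f (r • x) ∂μ := by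
  have hemb : MeasurableEmbedding (r • · : V → V) :=
    (Homeomorph.smulOfNeZero r hr).measurableEmbedding
  have hmap : ∫⁻ x in s, f (r • x) ∂μ = ∫⁻ x in r • s, f x ∂μ.map (r • ·) := by
    rw [hemb.restrict_map, hemb.lintegral_map, ← Set.image_smul,
      Set.preimage_image_eq _ hemb.injective]
  have hpow : |r ^ finrank ℝ V| ≠ 0 := abs_ne_zero.2 (pow_ne_zero _ hr)
  rw [hmap, Measure.map_addHaar_smul μ hr, Measure.restrict_smul, lintegral_smul_measure,
    smul_eq_mul, ← mul_assoc, ← ENNReal.ofReal_mul (abs_nonneg _), abs_inv, mul_inv_cancel₀ hpow,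
    ENNReal.ofReal_one, one_mul]

end Haar

lemma abs_mul_le_of_abs_le_div_of_isTop {ι : Type*} [Preorder ι] {α : ι → ℝ} (hα : ∀ i, 0 < α i)
    (hmono : Monotone α) {l : ι} (hl : IsTop l) {w c : ℝ} (hw : |w| ≤ c / α l) (i : ι) :
    |α i * w| ≤ c := by
  calc |α i * w| = α i * |w| := by rw [abs_mul, abs_of_pos (hα i)]
    _ ≤ α l * |w| := by gcongr; exact hmono (hl i)
    _ ≤ c := (le_div_iff₀' (hα l)).1 hw

section Jhat

open Real

variable {d k : ℕ} {α : Fin d → ℝ}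

lemma finrank_E (hk : 2 * d ≤ k) : Module.finrank ℝ (E d k) = k + 1 := by
  simp only [Module.finrank_prod, Module.finrank_pi_fintype, Module.finrank_self, sum_const,
    card_univ, Fintype.card_fin, smul_eq_mul]
  lia

instance isAddHaarMeasure_volume_E : (volume : Measure (E d k)).IsAddHaarMeasure :=
  have : (volume : Measure ((Fin d → ℝ × ℝ) × ℝ)).IsAddHaarMeasure :=
    Measure.prod.instIsAddHaarMeasure volume volume
  Measure.prod.instIsAddHaarMeasure volume volume

/-- The coefficient of `‖pⁱ‖²` in `Ĵ(p, w)`, with the powers of `w` absorbed into `sinc` and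
`sincSecondMoment` so that `w = 0` needs no separate case. -/
noncomputable def JhatWeight (α : Fin d → ℝ) (i : Fin d) (w : ℝ) : ℝ :=
  (α i / 2) ^ 2 * (∏ j ∈ univ.erase i, sinc (α j * w / 2) ^ 2) *
    (sinc (α i * w / 2) * sincSecondMoment (α i * w / 2))

lemma continuous_JhatWeight (i : Fin d) : Continuous (JhatWeight α i) := by
  have := continuous_sincSecondMoment
  unfold JhatWeight
  fun_prop

lemma JhatWeight_zero (i : Fin d) : JhatWeight α i 0 = 1 / 12 * α i ^ 2 := by
  simp only [JhatWeight, mul_zero, zero_div, sinc_zero, one_pow, prod_const_one,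
    sincSecondMoment_zero]
  ring

lemma JhatWeight_eq_of_ne_zero (hα : ∀ i, α i ≠ 0) {w : ℝ} (hw : w ≠ 0) (i : Fin d) :
    JhatWeight α i w = 2 ^ (2 * d) / ((∏ j, α j) ^ 2 * w ^ (2 * d + 2)) *
      ((∏ j ∈ univ.erase i, sin (α j * w / 2) ^ 2) * sin (α i * w / 2) *
        (sin (α i * w / 2) - α i * w / 2 * cos (α i * w / 2))) := by
  have hprod : (∏ j ∈ univ.erase i, (α j * w / 2) ^ 2) * (α i * w / 2) ^ 2 =
      (∏ j, α j) ^ 2 * w ^ (2 * d) / 2 ^ (2 * d) := by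
    rw [prod_erase_mul _ _ (mem_univ i), prod_pow, prod_div_distrib, prod_mul_distrib]
    simp only [prod_const, card_univ, Fintype.card_fin]
    ring
  have hα_prod : ∏ j, α j ≠ 0 := prod_ne_zero_iff.2 fun j _ ↦ hα j
  rw [← pow_three_mul_sincSecondMoment]
  simp only [← mul_sinc (α _ * w / 2), mul_pow _ (sinc _), prod_mul_distrib]
  rw [JhatWeight]
  set P := ∏ j ∈ univ.erase i, sinc (α j * w / 2) ^ 2
  calc (α i / 2) ^ 2 * P * (sinc (α i * w / 2) * sincSecondMoment (α i * w / 2))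
      = 2 ^ (2 * d) / ((∏ j, α j) ^ 2 * w ^ (2 * d + 2)) *
          ((∏ j, α j) ^ 2 * w ^ (2 * d) / 2 ^ (2 * d)) * (α i * w / 2) ^ 2 *
          (P * (sinc (α i * w / 2) * sincSecondMoment (α i * w / 2))) := by
        field_simp
        ring
    _ = _ := by
        rw [← hprod]
        ring

lemma Jhat_eq_sum_JhatWeight (hα : ∀ i, α i ≠ 0) (q : E d k) :
    Jhat d k α q = ∑ i, JhatWeight α i q.2.2 * ((q.2.1 i).1 ^ 2 + (q.2.1 i).2 ^ 2) := by
  unfold Jhat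
  split_ifs with hw
  · simp only [hw, JhatWeight_zero, mul_sum, mul_assoc]
  · simp only [JhatWeight_eq_of_ne_zero hα hw, mul_sum]
    exact sum_congr rfl fun i _ ↦ by ring

lemma continuous_Jhat (hα : ∀ i, α i ≠ 0) : Continuous (Jhat d k α) := by
  have := continuous_JhatWeight (α := α)
  rw [funext (Jhat_eq_sum_JhatWeight hα)]
  fun_prop

lemma JhatWeight_le_JhatWeight_mul {w t : ℝ} (hw : ∀ i, |α i * w| ≤ 2 * π)
    (ht : t ∈ Set.Icc (0 : ℝ) 1) (i : Fin d) : JhatWeight α i w ≤ JhatWeight α i (t * w) := by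
  have hpi (j : Fin d) : |α j * w / 2| ≤ π := by
    rw [abs_div, abs_two]
    linarith [hw j]
  have hscale (j : Fin d) : |α j * (t * w) / 2| ≤ |α j * w / 2| := by
    rw [show α j * (t * w) / 2 = t * (α j * w / 2) by ring]
    exact abs_mul_le_of_mem_Icc ht
  have hsinc (j : Fin d) : sinc (α j * w / 2) ≤ sinc (α j * (t * w) / 2) :=
    sinc_le_sinc_of_abs_le_abs (hscale j) (hpi j)
  have hsinc_nonneg (j : Fin d) : 0 ≤ sinc (α j * w / 2) := sinc_nonneg_of_abs_le_pi (hpi j)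
  have hmoment : sincSecondMoment (α i * w / 2) ≤ sincSecondMoment (α i * (t * w) / 2) :=
    sincSecondMoment_le_of_abs_le_abs (hscale i) (hpi i)
  have hmoment_nonneg : 0 ≤ sincSecondMoment (α i * w / 2) :=
    sincSecondMoment_nonneg_of_abs_le_pi (hpi i)
  have hprod : ∏ j ∈ univ.erase i, sinc (α j * w / 2) ^ 2 ≤
      ∏ j ∈ univ.erase i, sinc (α j * (t * w) / 2) ^ 2 :=
    prod_le_prod (fun j _ ↦ sq_nonneg _) fun j _ ↦ pow_le_pow_left₀ (hsinc_nonneg j) (hsinc j) 2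
  have hdiag : sinc (α i * w / 2) * sincSecondMoment (α i * w / 2) ≤
      sinc (α i * (t * w) / 2) * sincSecondMoment (α i * (t * w) / 2) :=
    mul_le_mul (hsinc i) hmoment hmoment_nonneg ((hsinc_nonneg i).trans (hsinc i))
  exact mul_le_mul (mul_le_mul_of_nonneg_left hprod (sq_nonneg _)) hdiag
    (mul_nonneg (hsinc_nonneg i) hmoment_nonneg) (by positivity)

lemma sq_mul_Jhat_le_Jhat_smul (hα : ∀ i, α i ≠ 0) {q : E d k} (hq : ∀ i, |α i * q.2.2| ≤ 2 * π)
    {t : ℝ} (ht : t ∈ Set.Icc (0 : ℝ) 1) : t ^ 2 * Jhat d k α q ≤ Jhat d k α (t • q) := by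
  rw [Jhat_eq_sum_JhatWeight hα, Jhat_eq_sum_JhatWeight hα, mul_sum]
  refine sum_le_sum fun i _ ↦ ?_
  calc t ^ 2 * (JhatWeight α i q.2.2 * ((q.2.1 i).1 ^ 2 + (q.2.1 i).2 ^ 2))
      ≤ t ^ 2 * (JhatWeight α i (t * q.2.2) * ((q.2.1 i).1 ^ 2 + (q.2.1 i).2 ^ 2)) := by
        gcongr
        exact JhatWeight_le_JhatWeight_mul hq ht i
    _ = JhatWeight α i (t • q).2.2 * (((t • q).2.1 i).1 ^ 2 + ((t • q).2.1 i).2 ^ 2) := by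
        simp only [Prod.smul_fst, Prod.smul_snd, Pi.smul_apply, smul_eq_mul]
        ring

theorem Jhat_integral_scaling_general (hk : 2 * d ≤ k) (hα : ∀ i, α i ≠ 0) (A : Set (E d k))
    (hA : ∀ q ∈ A, ∀ i, |α i * q.2.2| ≤ 2 * π) {t : ℝ} (ht : t ∈ Set.Icc (0 : ℝ) 1) :
    ENNReal.ofReal (t ^ (k + 3)) * ∫⁻ q in A, ENNReal.ofReal (Jhat d k α q) ≤
      ∫⁻ q in t • A, ENNReal.ofReal (Jhat d k α q) := by
  rcases ht.1.eq_or_lt with rfl | ht_pos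
  · simp
  have hpointwise (q : E d k) (hq : q ∈ A) :
      ENNReal.ofReal (t ^ 2) * ENNReal.ofReal (Jhat d k α q) ≤
        ENNReal.ofReal (Jhat d k α (t • q)) := by
    rw [← ENNReal.ofReal_mul (sq_nonneg t)]
    exact ENNReal.ofReal_le_ofReal (sq_mul_Jhat_le_Jhat_smul hα (hA q hq) ht)
  have hmeas : Measurable fun q : E d k ↦ ENNReal.ofReal (Jhat d k α (t • q)) :=
    ((continuous_Jhat hα).comp (continuous_const_smul t)).measurable.ennreal_ofReal
  calc ENNReal.ofReal (t ^ (k + 3)) * ∫⁻ q in A, ENNReal.ofReal (Jhat d k α q)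
      = ENNReal.ofReal (t ^ (k + 1)) *
          ∫⁻ q in A, ENNReal.ofReal (t ^ 2) * ENNReal.ofReal (Jhat d k α q) := by
        rw [lintegral_const_mul' _ _ ENNReal.ofReal_ne_top, ← mul_assoc,
          ← ENNReal.ofReal_mul (by positivity), ← pow_add]
    _ ≤ ENNReal.ofReal (t ^ (k + 1)) * ∫⁻ q in A, ENNReal.ofReal (Jhat d k α (t • q)) := by
        gcongr _ * ?_
        exact setLIntegral_mono hmeas hpointwise
    _ = ∫⁻ q in t • A, ENNReal.ofReal (Jhat d k α q) := by
        rw [setLIntegral_smul_set volume _ ht_pos.ne', finrank_E hk, abs_of_pos (by positivity)]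

end Jhat

/-- Step 1 of the proof of Theorem 1.1: for every measurable subset `A` of the
cotangent injectivity domain `D` and every `t ∈ [0,1]`,
`∫_{t·A} Ĵ ≥ t^{k+3} ∫_A Ĵ`; this is the inequality `μ(Ω_t) ≥ t^{k+3} μ(Ω)`
proving that a corank-1 Carnot group of rank `k` satisfies `MCP(0, k+3)`. -/
theorem Jhat_integral_scaling (d k : ℕ) (hd : 1 ≤ d) (hk : 2 * d ≤ k)
    (α : Fin d → ℝ) (hα : ∀ i, 0 < α i) (hmono : Monotone α)
    (A : Set (E d k)) (hA : MeasurableSet A)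
    (hAD : A ⊆ {q : E d k |
      |q.2.2| < 2 * Real.pi / α ⟨d - 1, Nat.sub_lt hd one_pos⟩ ∧
      ∃ i, q.2.1 i ≠ 0})
    (t : ℝ) (ht : t ∈ Set.Icc (0 : ℝ) 1) :
    ∫⁻ q in t • A, ENNReal.ofReal (Jhat d k α q) ≥
      ENNReal.ofReal (t ^ (k + 3)) * ∫⁻ q in A, ENNReal.ofReal (Jhat d k α q) := by
  have hAπ : ∀ q ∈ A, ∀ i, |α i * q.2.2| ≤ 2 * Real.pi := fun q hq ↦
    abs_mul_le_of_abs_le_div_of_isTop hα hmono (fun i ↦ Nat.le_sub_one_of_lt i.isLt) (hAD hq).1.le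
  exact Jhat_integral_scaling_general hk (fun i ↦ (hα i).ne') A hAπ ht
end

section
/- Let n, k, s, m be natural numbers with 1 ≤ k < n, s ≥ 2 and m ≥ s. Let d : {0, 1, …, s} → ℕ be nondecreasing with d(0) = 0, d(1) = k, d(s) = n, and let κ : {0, 1, …, m} → ℕ be nondecreasing with κ(0) = 0, κ(1) = k, κ(m) = n, and κ(i) ≤ d(min(i, s)) for all 0 ≤ i ≤ m. Then Σ_{i=1}^m (2i−1)·(κ(i) − κ(i−1)) > Σ_{i=1}^s i·(d(i) − d(i−1)) > n. -/
open Finset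

/-!
Summation by parts turns `∑ i (f i - f (i - 1))` into the sum of codimensions
`∑_{j < p} (f p - f j)`. For `d` the terms `j = 0, 1` of the latter already exceed `n`, which gives
`dim_H > n`. The bound `κ j ≤ d (min j s)` makes every codimension of `κ` at least that of `d`, so
the sum `K` for `κ` is at least `dim_H`. Since `∑ (2i - 1) (κ i - κ (i - 1)) = 2 K - n`, the
geodesic dimension is at least `dim_H + (dim_H - n)`.
-/

section AddCommGroup

variable {A : Type*} [AddCommGroup A]

theorem sum_Icc_nsmul_sub_eq_sum_range_sub (f : ℕ → A) (p : ℕ) :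
    ∑ i ∈ Icc 1 p, i • (f i - f (i - 1)) = ∑ j ∈ range p, (f p - f j) := by
  induction p with
  | zero => simp
  | succ p ih =>
    rw [sum_Icc_succ_top (Nat.le_add_left 1 p), ih, sum_range_succ]
    simp only [sum_sub_distrib, sum_const, card_range, Nat.add_sub_cancel]
    module

theorem sum_Icc_sub_pred (f : ℕ → A) (p : ℕ) :
    ∑ i ∈ Icc 1 p, (f i - f (i - 1)) = f p - f 0 := by
  induction p with
  | zero => simp
  | succ p ih =>
    rw [sum_Icc_succ_top (Nat.le_add_left 1 p), ih, Nat.add_sub_cancel, add_comm,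
      sub_add_sub_cancel]

theorem sum_Icc_two_mul_sub_one_nsmul_sub (f : ℕ → A) (p : ℕ) :
    ∑ i ∈ Icc 1 p, (2 * i - 1) • (f i - f (i - 1)) =
      2 • ∑ j ∈ range p, (f p - f j) - (f p - f 0) := by
  rw [← sum_Icc_nsmul_sub_eq_sum_range_sub, ← sum_Icc_sub_pred, smul_sum, ← sum_sub_distrib]
  refine sum_congr rfl fun i hi ↦ ?_
  have one_le_two_mul : 1 ≤ 2 * i := by linarith [(mem_Icc.1 hi).1]
  rw [sub_nsmul _ one_le_two_mul, mul_nsmul', one_nsmul, ← sub_eq_add_neg]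

end AddCommGroup

section OrderedAddCommGroup

variable {A : Type*} [AddCommGroup A] [PartialOrder A] [IsOrderedAddMonoid A]
  {d κ : ℕ → A} {s m : ℕ}

theorem sub_lt_sum_range_sub (hs : 2 ≤ s) (hd_le : ∀ i < s, d i ≤ d s) (hd1 : d 1 < d s) :
    d s - d 0 < ∑ j ∈ range s, (d s - d j) :=
  calc
    d s - d 0 < (d s - d 0) + (d s - d 1) := lt_add_of_pos_right _ (sub_pos.2 hd1)
    _ = ∑ j ∈ range 2, (d s - d j) := by rw [sum_range_succ, sum_range_one]
    _ ≤ ∑ j ∈ range s, (d s - d j) :=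
      sum_le_sum_of_subset_of_nonneg (range_subset_range.2 hs) fun j hj _ ↦
        sub_nonneg.2 (hd_le j (mem_range.1 hj))

theorem sum_range_sub_le_sum_range_sub (hsm : s ≤ m) (hκm : κ m = d s)
    (hκd : ∀ i < m, κ i ≤ d (min i s)) :
    ∑ j ∈ range s, (d s - d j) ≤ ∑ j ∈ range m, (κ m - κ j) :=
  calc
    ∑ j ∈ range s, (d s - d j) = ∑ j ∈ range s, (d s - d (min j s)) :=
      sum_congr rfl fun j hj ↦ by rw [min_eq_left (mem_range.1 hj).le]
    _ = ∑ j ∈ range m, (d s - d (min j s)) :=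
      sum_subset (range_subset_range.2 hsm) fun j _ hj ↦ by
        rw [min_eq_right (by simpa using hj), sub_self]
    _ ≤ ∑ j ∈ range m, (κ m - κ j) :=
      sum_le_sum fun j hj ↦ by
        rw [hκm]
        exact sub_le_sub_left (hκd j (mem_range.1 hj)) _

theorem geodesic_dim_gt_hausdorff_dim_gt_top_dim_general (hs : 2 ≤ s) (hsm : s ≤ m)
    (hd_le : ∀ i < s, d i ≤ d s) (hd1 : d 1 < d s) (hκ0 : κ 0 = d 0) (hκm : κ m = d s)
    (hκd : ∀ i < m, κ i ≤ d (min i s)) :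
    (∑ i ∈ Icc 1 m, (2 * i - 1) • (κ i - κ (i - 1)) >
      ∑ i ∈ Icc 1 s, i • (d i - d (i - 1))) ∧
    ∑ i ∈ Icc 1 s, i • (d i - d (i - 1)) > d s - d 0 := by
  rw [sum_Icc_two_mul_sub_one_nsmul_sub, sum_Icc_nsmul_sub_eq_sum_range_sub]
  have top_lt := sub_lt_sum_range_sub hs hd_le hd1
  have sum_le := sum_range_sub_le_sum_range_sub hsm hκm hκd
  refine ⟨?_, top_lt⟩
  calc
    ∑ j ∈ range s, (d s - d j)
      < ∑ j ∈ range s, (d s - d j) + (∑ j ∈ range s, (d s - d j) - (d s - d 0)) :=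
        lt_add_of_pos_right _ (sub_pos.2 top_lt)
    _ = 2 • ∑ j ∈ range s, (d s - d j) - (d s - d 0) := by rw [two_nsmul, add_sub_assoc]
    _ ≤ 2 • ∑ j ∈ range m, (κ m - κ j) - (κ m - κ 0) :=
        sub_le_sub (nsmul_le_nsmul_right sum_le 2) (by rw [hκ0, hκm])

end OrderedAddCommGroup

theorem cast_sum_Icc_mul_sub_pred {R : Type*} [Ring R] (w : ℕ → ℕ) {f : ℕ → ℕ} {p : ℕ}
    (hf : ∀ i j, i ≤ j → j ≤ p → f i ≤ f j) :
    ((∑ i ∈ Icc 1 p, w i * (f i - f (i - 1)) : ℕ) : R) =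
      ∑ i ∈ Icc 1 p, w i • ((f i : R) - f (i - 1)) := by
  rw [Nat.cast_sum]
  refine sum_congr rfl fun i hi ↦ ?_
  rw [Nat.cast_mul, Nat.cast_sub (hf _ _ (i.sub_le 1) (mem_Icc.1 hi).2), nsmul_eq_mul]

/-- The combinatorial core of Theorem 1.6 of the paper: if `d i = dim 𝒟ⁱ` are
the dimensions of the flag of the distribution of an equiregular, genuinely
sub-Riemannian structure (`k < n`, step `s ≥ 2`) and `κ i = dim ℱⁱ` are the
dimensions of the flag of a generic (ample) geodesic, then the geodesic
dimension `Σ (2i−1)(κ i − κ (i−1))` is strictly larger than the Hausdorff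
dimension `Σ i (d i − d (i−1))`, which in turn is strictly larger than the
topological dimension `n`. -/
theorem geodesic_dim_gt_hausdorff_dim_gt_top_dim (n k s m : ℕ)
    (hk1 : 1 ≤ k) (hkn : k < n) (hs : 2 ≤ s) (hm : s ≤ m)
    (d κ : ℕ → ℕ)
    (hdmono : ∀ i j, i ≤ j → j ≤ s → d i ≤ d j)
    (hd0 : d 0 = 0) (hd1 : d 1 = k) (hds : d s = n)
    (hκmono : ∀ i j, i ≤ j → j ≤ m → κ i ≤ κ j)
    (hκ0 : κ 0 = 0) (hκ1 : κ 1 = k) (hκm : κ m = n)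
    (hκd : ∀ i, i ≤ m → κ i ≤ d (min i s)) :
    (∑ i ∈ Icc 1 m, (2 * i - 1) * (κ i - κ (i - 1)) >
      ∑ i ∈ Icc 1 s, i * (d i - d (i - 1))) ∧
    ∑ i ∈ Icc 1 s, i * (d i - d (i - 1)) > n := by
  have cast_bounds := geodesic_dim_gt_hausdorff_dim_gt_top_dim_general (A := ℤ)
    (d := fun i ↦ d i) (κ := fun i ↦ κ i) hs hm
    (fun i hi ↦ mod_cast hdmono i s hi.le le_rfl) (by rwa [hd1, hds, Nat.cast_lt])
    (by rw [hκ0, hd0]) (by rw [hκm, hds]) (fun i hi ↦ mod_cast hκd i hi.le)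
  rw [← cast_sum_Icc_mul_sub_pred _ hκmono, ← cast_sum_Icc_mul_sub_pred (fun i ↦ i) hdmono,
    hd0, hds, Nat.cast_zero, sub_zero] at cast_bounds
  exact mod_cast cast_bounds
end

section
/- Let 𝔤 be a finite-dimensional real Lie algebra which is stratified of step s ≥ 3: there are linear subspaces 𝔤₁, …, 𝔤ₛ of 𝔤 forming an internal direct sum decomposition 𝔤 = 𝔤₁ ⊕ … ⊕ 𝔤ₛ, with [𝔤₁, 𝔤ᵢ] = 𝔤_{i+1} for all 1 ≤ i < s, [𝔤₁, 𝔤ₛ] = 0, and 𝔤ₛ ≠ 0. Then there exist a nonzero X ∈ 𝔤₁ and a nonzero linear functional λ : 𝔤 → ℝ such that λ((ad X)^i(Y)) = 0 for every Y ∈ 𝔤₁ and every integer i ≥ 0. -/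
open LieAlgebra

/-- The subspace spanned by the brackets of elements of two subspaces `A`, `B`
of a Lie algebra. -/
def bracketSpan {L : Type*} [LieRing L] [LieAlgebra ℝ L]
    (A B : Submodule ℝ L) : Submodule ℝ L :=
  Submodule.span ℝ {z | ∃ x ∈ A, ∃ y ∈ B, ⁅x, y⁆ = z}

/-!
For `X ∈ 𝔤₁` the subspace `(ad X)ᵏ(𝔤₁)` lies in `𝔤ₖ₊₁`, so as soon as one of these inclusions is
strict, the subspaces `(ad X)ᵏ(𝔤₁)` together do not span `𝔤` and some `λ ≠ 0` vanishes on all of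
them. If some nonzero `X` has `[X, 𝔤₁] ≠ 𝔤₂`, then `k = 1` works. Otherwise `ad X` maps `𝔤₁` onto
`𝔤₂` and kills `X`, so `dim 𝔤₂ < dim 𝔤₁`. Choose a functional `μ` that is nonzero on `𝔤₃`: the
linear map `X ↦ μ ∘ ad X`, from `𝔤₁` to the dual of `𝔤₂`, then has a nonzero element `X` in its
kernel, and `[X, [X, 𝔤₁]] = [X, 𝔤₂] ≠ 𝔤₃`, so `k = 2` works.
-/

open Module

theorem map_pow_le_of_forall_mem {R M : Type*} [Semiring R] [AddCommMonoid M] [Module R M]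
    {T : End R M} {V : ℕ → Submodule R M} (hT : ∀ i, ∀ y ∈ V i, T y ∈ V (i + 1)) (k : ℕ) :
    (V 0).map (T ^ k) ≤ V k := by
  induction k with
  | zero => simp [End.one_eq_id]
  | succ k ih =>
    rw [pow_succ', End.mul_eq_comp, Submodule.map_comp]
    exact (Submodule.map_mono ih).trans (Submodule.map_le_iff_le_comap.mpr (hT k))

theorem finrank_map_lt_of_apply_eq_zero {K M N : Type*} [DivisionRing K] [AddCommGroup M]
    [Module K M] [AddCommGroup N] [Module K N] {f : M →ₗ[K] N} {p : Submodule K M}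
    [FiniteDimensional K p] {x : M} (hx : x ∈ p) (hx₀ : x ≠ 0) (hfx : f x = 0) :
    finrank K (p.map f) < finrank K p := by
  have hker : LinearMap.ker (f.domRestrict p) ≠ ⊥ :=
    (Submodule.ne_bot_iff _).mpr ⟨⟨x, hx⟩, hfx, fun h => hx₀ (congrArg Subtype.val h)⟩
  have hpos : 0 < finrank K (LinearMap.ker (f.domRestrict p)) :=
    Submodule.one_le_finrank_iff.mpr hker
  have hrank := (f.domRestrict p).finrank_range_add_finrank_ker
  rw [LinearMap.range_domRestrict] at hrank
  lia

section LinearAlgebra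

variable {K M N P : Type*} [Field K] [AddCommGroup M] [Module K M] [AddCommGroup N] [Module K N]
  [AddCommGroup P] [Module K P]

theorem exists_ne_zero_not_le_map_of_finrank_lt (B : M →ₗ[K] N →ₗ[K] P) {p : Submodule K M}
    {q : Submodule K N} {r : Submodule K P} [FiniteDimensional K q]
    (hqp : finrank K q < finrank K p) (hr : r ≠ ⊥) :
    ∃ x ∈ p, x ≠ 0 ∧ ¬ r ≤ q.map (B x) := by
  obtain ⟨z, hz, hz₀⟩ := r.exists_mem_ne_zero_of_ne_bot hr
  obtain ⟨μ, hμz⟩ := Projective.exists_dual_ne_zero K hz₀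
  let F : p →ₗ[K] Dual K q := (B.domRestrict₁₂ p q).compr₂ μ
  have : FiniteDimensional K p := .of_finrank_pos (by lia)
  have hF : LinearMap.ker F ≠ ⊥ :=
    LinearMap.ker_ne_bot_of_finrank_lt (by rwa [Subspace.dual_finrank_eq])
  obtain ⟨⟨x, hx⟩, hxF, hx₀⟩ := Submodule.exists_mem_ne_zero_of_ne_bot hF
  refine ⟨x, hx, fun h => hx₀ (Subtype.ext h), fun hle => hμz ?_⟩
  obtain ⟨y, hy, rfl⟩ := hle hz
  exact LinearMap.congr_fun (LinearMap.mem_ker.mp hxF) ⟨y, hy⟩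

theorem exists_dual_ne_zero_forall_le_ker_of_iSupIndep {ι : Type*} {p q : ι → Submodule K M}
    (hp : iSupIndep p) (hqp : q ≤ p) {k : ι} (hk : q k ≠ p k) :
    ∃ φ : Dual K M, φ ≠ 0 ∧ ∀ i, q i ≤ LinearMap.ker φ := by
  have hq : iSup q ≠ ⊤ := fun htop =>
    hk (congrFun ((hp.le_iff_eq_of_iSup_eq_top htop).mp hqp) k)
  obtain ⟨φ, hφ₀, hφ⟩ := (iSup q).exists_le_ker_of_lt_top hq.lt_top
  exact ⟨φ, hφ₀, fun i => (le_iSup q i).trans hφ⟩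

end LinearAlgebra

section GradedLieAlgebra

variable {K L : Type*} [Field K] [LieRing L] [LieAlgebra K L]

theorem exists_map_ad_pow_ne {V : ℕ → Submodule K L} [FiniteDimensional K (V 0)]
    (h₀ : V 0 ≠ ⊥) (h₂ : V 2 ≠ ⊥) :
    ∃ X ∈ V 0, X ≠ 0 ∧ ∃ k, (V 0).map (ad K L X ^ k) ≠ V k := by
  by_cases hsurj : ∀ X ∈ V 0, X ≠ 0 → (V 0).map (ad K L X ^ 1) = V 1
  · obtain ⟨X₀, hX₀, hX₀_ne⟩ := (V 0).exists_mem_ne_zero_of_ne_bot h₀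
    have hdim : finrank K (V 1) < finrank K (V 0) := by
      rw [← hsurj X₀ hX₀ hX₀_ne, pow_one]
      exact finrank_map_lt_of_apply_eq_zero hX₀ hX₀_ne (lie_self X₀)
    have : FiniteDimensional K (V 1) := by
      rw [← hsurj X₀ hX₀ hX₀_ne]
      infer_instance
    obtain ⟨X, hX, hX_ne, hnot_le⟩ :=
      exists_ne_zero_not_le_map_of_finrank_lt (ad K L : L →ₗ[K] End K L) hdim h₂
    refine ⟨X, hX, hX_ne, 2, fun hsq => hnot_le ?_⟩
    rw [← hsq, ← hsurj X hX hX_ne, pow_two, pow_one, End.mul_eq_comp, Submodule.map_comp]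
    exact le_rfl
  · push Not at hsurj
    obtain ⟨X, hX, hX_ne, hne⟩ := hsurj
    exact ⟨X, hX, hX_ne, 1, hne⟩

/-- Here `V i` plays the role of the layer `𝔤_{i+1}`. -/
theorem step3_abnormal_exists_general {V : ℕ → Submodule K L} [FiniteDimensional K (V 0)]
    (hind : iSupIndep V) (hlie : ∀ X ∈ V 0, ∀ i, ∀ Y ∈ V i, ⁅X, Y⁆ ∈ V (i + 1))
    (h₀ : V 0 ≠ ⊥) (h₂ : V 2 ≠ ⊥) :
    ∃ X ∈ V 0, X ≠ 0 ∧ ∃ φ : Dual K L, φ ≠ 0 ∧ ∀ Y ∈ V 0, ∀ i : ℕ, φ ((ad K L X ^ i) Y) = 0 := by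
  obtain ⟨X, hX, hX_ne, k, hk⟩ := exists_map_ad_pow_ne h₀ h₂
  obtain ⟨φ, hφ_ne, hφ⟩ := exists_dual_ne_zero_forall_le_ker_of_iSupIndep hind
    (map_pow_le_of_forall_mem (hlie X hX)) hk
  exact ⟨X, hX, hX_ne, φ, hφ_ne, fun Y hY i => hφ i (Submodule.mem_map_of_mem hY)⟩

end GradedLieAlgebra

section Layer

variable {R M : Type*} [Semiring R] [AddCommMonoid M] [Module R M]

/-- The layers `𝔤₁, …, 𝔤ₛ` of a stratification of step `s`, reindexed from `0` and continued by
zero, so that they form a grading indexed by all of `ℕ`. -/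
def layer (g : ℕ → Submodule R M) (s i : ℕ) : Submodule R M :=
  if i < s then g (i + 1) else ⊥

variable {g : ℕ → Submodule R M} {s i : ℕ}

theorem layer_of_lt (hi : i < s) : layer g s i = g (i + 1) := if_pos hi

theorem layer_of_le (hi : s ≤ i) : layer g s i = ⊥ := if_neg hi.not_gt

theorem iSupIndep_layer (hg : iSupIndep fun i : Fin s => g ((i : ℕ) + 1)) :
    iSupIndep (layer g s) := by
  have hlt (i : {i // layer g s i ≠ ⊥}) : (i : ℕ) < s :=
    not_le.mp fun hi => i.2 (layer_of_le hi)
  let toFin (i : {i // layer g s i ≠ ⊥}) : Fin s := ⟨i, hlt i⟩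
  have hinj : Function.Injective toFin := fun i j hij => Subtype.ext (congrArg Fin.val hij)
  refine iSupIndep_ne_bot.mp ?_
  convert hg.comp hinj with i
  exact layer_of_lt (hlt i)

end Layer

section Stratification

variable {L : Type*} [LieRing L] [LieAlgebra ℝ L]

theorem lie_mem_bracketSpan {A B : Submodule ℝ L} {X Y : L} (hX : X ∈ A) (hY : Y ∈ B) :
    ⁅X, Y⁆ ∈ bracketSpan A B :=
  Submodule.subset_span ⟨X, hX, Y, hY, rfl⟩

theorem bracketSpan_bot (A : Submodule ℝ L) : bracketSpan A ⊥ = ⊥ := by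
  rw [bracketSpan, Submodule.span_eq_bot]
  rintro _ ⟨X, -, Y, hY, rfl⟩
  rw [(Submodule.mem_bot ℝ).mp hY, lie_zero]

variable {g : ℕ → Submodule ℝ L} {s : ℕ}

theorem ne_bot_of_bracketSpan_eq
    (hbracket : ∀ i, 1 ≤ i → i < s → bracketSpan (g 1) (g i) = g (i + 1)) (hne : g s ≠ ⊥)
    {i : ℕ} (hi : 1 ≤ i) (his : i ≤ s) : g i ≠ ⊥ := by
  refine Nat.decreasingInduction' (P := fun k => g k ≠ ⊥) (fun k hks hik hsucc hk => hsucc ?_)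
    his hne
  rw [← hbracket k (hi.trans hik) hks, hk, bracketSpan_bot]

theorem lie_mem_layer (hbracket : ∀ i, 1 ≤ i → i < s → bracketSpan (g 1) (g i) ≤ g (i + 1))
    (hlast : bracketSpan (g 1) (g s) = ⊥) {X : L} (hX : X ∈ g 1) (i : ℕ) {Y : L}
    (hY : Y ∈ layer g s i) : ⁅X, Y⁆ ∈ layer g s (i + 1) := by
  rcases lt_trichotomy (i + 1) s with hlt | rfl | hgt
  · rw [layer_of_lt (by lia)] at hY
    rw [layer_of_lt hlt]
    exact hbracket (i + 1) (by lia) hlt (lie_mem_bracketSpan hX hY)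
  · rw [layer_of_lt i.lt_succ_self] at hY
    rw [layer_of_le le_rfl, ← hlast]
    exact lie_mem_bracketSpan hX hY
  · rw [layer_of_le (by lia), Submodule.mem_bot] at hY
    rw [hY, lie_zero]
    exact zero_mem _

end Stratification

/-- Lemma 8.3 of the paper: every stratified real Lie algebra of step `s ≥ 3`
admits a nonzero `X ∈ 𝔤₁` and a nonzero linear functional `λ` annihilating
`(ad X)ⁱ(𝔤₁)` for all `i ≥ 0`.  By the characterization of abnormal geodesics,
the integral curve of the left-invariant field `X` through the identity of the
corresponding Carnot group is a (normal and) abnormal geodesic, so Carnot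
groups of step at least 3 are not ideal. -/
theorem step3_abnormal_exists {L : Type*} [LieRing L] [LieAlgebra ℝ L]
    [FiniteDimensional ℝ L]
    (s : ℕ) (hs : 3 ≤ s) (g : ℕ → Submodule ℝ L)
    (hinternal : DirectSum.IsInternal (fun i : Fin s => g ((i : ℕ) + 1)))
    (hbracket : ∀ i, 1 ≤ i → i < s → bracketSpan (g 1) (g i) = g (i + 1))
    (hlast : bracketSpan (g 1) (g s) = ⊥)
    (hne : g s ≠ ⊥) :
    ∃ X ∈ g 1, X ≠ 0 ∧ ∃ lam : L →ₗ[ℝ] ℝ, lam ≠ 0 ∧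
      ∀ Y ∈ g 1, ∀ i : ℕ, lam (((ad ℝ L X) ^ i) Y) = 0 := by
  have h₀ : layer g s 0 = g 1 := layer_of_lt (by lia)
  have h₂ : layer g s 2 = g 3 := layer_of_lt hs
  rw [← h₀]
  refine step3_abnormal_exists_general (iSupIndep_layer hinternal.submodule_iSupIndep) ?_ ?_ ?_
  · exact fun X hX i Y => lie_mem_layer (fun i hi his => (hbracket i hi his).le) hlast (h₀ ▸ hX) i
  · exact h₀ ▸ ne_bot_of_bracketSpan_eq hbracket hne le_rfl (by lia)
  · exact h₂ ▸ ne_bot_of_bracketSpan_eq hbracket hne (by lia) hs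
end
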